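/- Let n ≥ 2 and N ≥ 1. Fix x₀ ∈ ℝⁿ with |x₀| = 1 and a unit vector v₀ ∈ ℝⁿ with ⟪x₀, v₀⟫ = 0. Let W : ℝⁿ × ℝⁿ × ℝⁿ → Matrix (Fin N) (Fin N) ℂ be real-analytic and such that W(p, v, x) is an invertible matrix for all p, x ∈ ℝⁿ and all unit vectors v. Let f : ℝⁿ → ℂ^N be continuous with support contained in the closed unit ball {x ∈ ℝⁿ : |x| ≤ 1}. Suppose there exists δ > 0 such that for every unit vector v ∈ ℝⁿ with |v − v₀| < δ and every p ∈ ℝⁿ with ⟪p, v⟫ = 0 and |p − x₀| < δ one has ∫_ℝ W(p, v, p + t v) · f(p + t v) dt = 0. Then there exists ε > 0 such that f = 0 on the ball {x ∈ ℝⁿ : |x − x₀| < ε}. -/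

import Mathlib

section aux
open MeasureTheory

theorem laplace_aux {F : Type*} [NormedAddCommGroup F] [NormedSpace ℝ F] [CompleteSpace F]
    (φ : ℝ → F) (hφ : Continuous φ) (b : ℝ) (hb : b < 0) (M ε C : ℝ) (hM : 0 < M)
    (h : ∀ k : ℕ, 1 ≤ k → ‖∫ y in b..0, Real.exp (k * M * y) • φ y‖ ≤ C * Real.exp (-(ε * M * k)))
    (a : ℝ) (ha : b < a) (ha0 : a < 0) (haε : -ε < a) :
    ∫ y in a..0, φ y = 0 := by
  set μ := volume.restrict (Set.Ioc b 0) with hμ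
  have hφint : Integrable φ μ := (hφ.integrableOn_Ioc)
  have h' : ∀ k : ℕ, 1 ≤ k → ‖∫ y, Real.exp (k * M * y) • φ y ∂μ‖ ≤ C * Real.exp (-(ε * M * k)) := by
    intro k hk
    have := h k hk
    rwa [intervalIntegral.integral_of_le hb.le] at this
  have hC : 0 ≤ C := by
    have := (norm_nonneg _).trans (h' 1 le_rfl)
    exact nonneg_of_mul_nonneg_left this (Real.exp_pos _)
  let I : ℕ → F := fun n => ∫ y, Real.exp (-Real.exp (n * M * (y - a))) • φ y ∂μ
  have hI1 : Filter.Tendsto I Filter.atTop (nhds (∫ y, (Set.Iio a).indicator φ y ∂μ)) := by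
    refine tendsto_integral_of_dominated_convergence (fun y => ‖φ y‖) ?_ hφint.norm ?_ ?_
    · intro n
      exact (Continuous.aestronglyMeasurable (by fun_prop))
    · intro n
      refine Filter.Eventually.of_forall fun y => ?_
      rw [norm_smul]
      have : ‖Real.exp (-Real.exp (n * M * (y - a)))‖ ≤ 1 := by
        rw [Real.norm_eq_abs, Real.abs_exp, Real.exp_le_one_iff]
        linarith [Real.exp_pos (n * M * (y - a))]
      nlinarith [norm_nonneg (φ y)]
    · have hne : ∀ᵐ y ∂μ, y ≠ a := by
        rw [ae_iff]
        simp only [not_not, Set.ofPred_eq_eq_singleton]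
        exact le_antisymm ((Measure.restrict_le_self _).trans (by simp)) (by simp)
      filter_upwards [hne] with y hy
      rcases lt_or_gt_of_ne hy with hlt | hgt
      · rw [Set.indicator_of_mem (by exact hlt)]
        have : Filter.Tendsto (fun n : ℕ => Real.exp (-Real.exp (n * M * (y - a))) • φ y) Filter.atTop
            (nhds (Real.exp (-0) • φ y)) := by
          refine Filter.Tendsto.smul_const ?_ _
          refine (Real.continuous_exp.tendsto _).comp (Filter.Tendsto.neg ?_)
          refine Real.tendsto_exp_atBot.comp ?_
          have : (fun n : ℕ => (n : ℝ) * M * (y - a)) = fun n : ℕ => (n : ℝ) * (M * (y - a)) := by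
            ext n; ring
          rw [this]
          exact (tendsto_natCast_atTop_atTop).atTop_mul_const_of_neg (mul_neg_of_pos_of_neg hM (by linarith))
        simpa using this
      · rw [Set.indicator_of_notMem (by simp; exact hgt.le)]
        have : Filter.Tendsto (fun n : ℕ => Real.exp (-Real.exp (n * M * (y - a))) • φ y) Filter.atTop
            (nhds ((0 : ℝ) • φ y)) := by
          refine Filter.Tendsto.smul_const ?_ _
          refine Real.tendsto_exp_neg_atTop_nhds_zero.comp ?_
          refine Real.tendsto_exp_atTop.comp ?_
          have : (fun n : ℕ => (n : ℝ) * M * (y - a)) = fun n : ℕ => (n : ℝ) * (M * (y - a)) := by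
            ext n; ring
          rw [this]
          exact (tendsto_natCast_atTop_atTop).atTop_mul_const (mul_pos hM (by linarith))
        simpa using this
  have hI2 : Filter.Tendsto I Filter.atTop (nhds (∫ y, φ y ∂μ)) := by
    have hbound : ∀ n : ℕ, 1 ≤ n → ‖I n - ∫ y, φ y ∂μ‖ ≤
        C * (Real.exp (Real.exp (-(n * M * (ε + a)))) - 1) := by
      intro n hn
      let G : ℕ → ℝ → F := fun k y => ((k.factorial : ℝ)⁻¹ * (-Real.exp (n * M * (y - a))) ^ k) • φ y
      have hexp : ∀ x : ℝ, HasSum (fun k : ℕ => (k.factorial : ℝ)⁻¹ * x ^ k) (Real.exp x) := by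
        intro x
        have := NormedSpace.expSeries_div_hasSum_exp x
        rw [← Real.exp_eq_exp_ℝ] at this
        simpa [div_eq_inv_mul] using this
      have hGint : ∀ k, Integrable (G k) μ := by
        intro k
        exact (Continuous.integrableOn_Ioc (by fun_prop))
      have hGle : ∀ k, ∫ y, ‖G k y‖ ∂μ ≤ (k.factorial : ℝ)⁻¹ * (Real.exp (n * M * (-a))) ^ k * ∫ y, ‖φ y‖ ∂μ := by
        intro k
        rw [← integral_const_mul]
        refine integral_mono_ae (hGint k).norm (hφint.norm.const_mul _) ?_
        filter_upwards [ae_restrict_mem measurableSet_Ioc] with y hy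
        simp only [G, norm_smul, norm_mul, norm_pow, norm_neg, Real.norm_eq_abs, Real.abs_exp]
        rw [abs_of_nonneg (by positivity)]
        gcongr
        linarith [hy.2]
      have hsum : HasSum (fun k => ∫ y, G k y ∂μ) (I n) := by
        have := hasSum_integral_of_summable_integral_norm hGint (Summable.of_nonneg_of_le
          (fun k => integral_nonneg fun y => norm_nonneg _) hGle ((hexp _).summable.mul_right _))
        convert this using 1
        refine integral_congr_ae (Filter.Eventually.of_forall fun y => ?_)
        exact (((hexp (-Real.exp (n * M * (y - a)))).smul_const (φ y)).tsum_eq).symm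
      have hsum' := (hasSum_nat_add_iff' 1).2 hsum
      have hG0 : ∫ y, G 0 y ∂μ = ∫ y, φ y ∂μ := by simp [G]
      simp only [Finset.range_one, Finset.sum_singleton, hG0] at hsum'
      have hs2 := ((hasSum_nat_add_iff' 1).2 (hexp (Real.exp (-(n * M * (ε + a)))))).mul_left C
      simp only [Finset.range_one, Finset.sum_singleton, pow_zero, Nat.factorial_zero, Nat.cast_one,
        inv_one, mul_one] at hs2
      rw [← hsum'.tsum_eq]
      refine tsum_of_norm_bounded hs2 ?_
      intro k
      have e1 : ∫ y, G (k+1) y ∂μ = (((k+1).factorial : ℝ)⁻¹ * ((-1) ^ (k+1) * Real.exp (-((k+1 : ℕ) * n * M * a)))) •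
          ∫ y, Real.exp (((k+1) * n : ℕ) * M * y) • φ y ∂μ := by
        rw [← integral_smul]
        refine integral_congr_ae (Filter.Eventually.of_forall fun y => ?_)
        simp only [G, smul_smul]
        congr 1
        have e0 : Real.exp (n * M * (y - a)) ^ (k+1) =
            Real.exp (-((k+1 : ℕ) * n * M * a)) * Real.exp (((k+1) * n : ℕ) * M * y) := by
          rw [← Real.exp_add, ← Real.exp_nat_mul]; congr 1; push_cast; ring
        rw [neg_pow, e0]; ring
      rw [e1, norm_smul]
      have h2 := h' ((k+1) * n) (Nat.mul_pos (by omega) hn)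
      have e3 : ‖((k+1).factorial : ℝ)⁻¹ * ((-1) ^ (k+1) * Real.exp (-((k+1 : ℕ) * n * M * a)))‖
          = ((k+1).factorial : ℝ)⁻¹ * Real.exp (-((k+1 : ℕ) * n * M * a)) := by
        simp [norm_mul, Real.abs_exp]
      rw [e3]
      refine (mul_le_mul_of_nonneg_left h2 (by positivity)).trans (le_of_eq ?_)
      rw [← Real.exp_nat_mul]
      have : Real.exp (((k+1 : ℕ) : ℝ) * -(n * M * (ε + a))) =
          Real.exp (-((k+1 : ℕ) * n * M * a)) * Real.exp (-(ε * M * ((k+1) * n : ℕ))) := by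
        rw [← Real.exp_add]; congr 1; push_cast; ring
      rw [this]; ring
    rw [tendsto_iff_norm_sub_tendsto_zero]
    have hlim : Filter.Tendsto (fun n : ℕ => C * (Real.exp (Real.exp (-(n * M * (ε + a)))) - 1))
        Filter.atTop (nhds 0) := by
      have : Filter.Tendsto (fun n : ℕ => C * (Real.exp (Real.exp (-(n * M * (ε + a)))) - 1))
        Filter.atTop (nhds (C * (Real.exp 0 - 1))) := by
        refine Filter.Tendsto.const_mul _ (Filter.Tendsto.sub_const ?_ _)
        refine (Real.continuous_exp.tendsto _).comp ?_
        refine Real.tendsto_exp_neg_atTop_nhds_zero.comp ?_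
        have : (fun n : ℕ => (n : ℝ) * M * (ε + a)) = fun n : ℕ => (n : ℝ) * (M * (ε + a)) := by
            ext n; ring
        rw [this]
        exact (tendsto_natCast_atTop_atTop).atTop_mul_const (mul_pos hM (by linarith))
      simpa using this
    refine squeeze_zero' (Filter.Eventually.of_forall fun n => norm_nonneg _) ?_ hlim
    filter_upwards [Filter.eventually_ge_atTop 1] with n hn using hbound n hn
  have heq := tendsto_nhds_unique hI1 hI2
  rw [integral_indicator measurableSet_Iio, hμ, Measure.restrict_restrict measurableSet_Iio] at heq
  have hset : Set.Iio a ∩ Set.Ioc b 0 = Set.Ioo b a := by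
    ext y; simp only [Set.mem_inter_iff, Set.mem_Iio, Set.mem_Ioc, Set.mem_Ioo]
    constructor
    · rintro ⟨h1, h2, h3⟩; exact ⟨h2, h1⟩
    · rintro ⟨h1, h2⟩; exact ⟨h2, h1, by linarith⟩
  rw [hset, ← integral_Ioc_eq_integral_Ioo, ← intervalIntegral.integral_of_le ha.le,
    ← intervalIntegral.integral_of_le hb.le,
    ← intervalIntegral.integral_add_adjacent_intervals (hφ.intervalIntegrable b a) (hφ.intervalIntegrable a 0)] at heq
  simpa using heq

theorem laplace_unique {F : Type*} [NormedAddCommGroup F] [NormedSpace ℝ F] [CompleteSpace F]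
    (φ : ℝ → F) (hφ : Continuous φ) (b : ℝ) (hb : b < 0) (M ε C : ℝ) (hM : 0 < M)
    (h : ∀ k : ℕ, 1 ≤ k → ‖∫ y in b..0, Real.exp (k * M * y) • φ y‖ ≤ C * Real.exp (-(ε * M * k)))
    (a : ℝ) (ha : b < a) (ha0 : a < 0) (haε : -ε < a) : φ a = 0 := by
  have h1 := intervalIntegral.integral_hasDerivAt_left (hφ.intervalIntegrable a 0)
    (hφ.stronglyMeasurableAtFilter _ _) hφ.continuousAt
  have h2 : (fun u => ∫ y in u..0, φ y) =ᶠ[nhds a] fun _ => 0 := by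
    filter_upwards [eventually_gt_nhds ha, eventually_lt_nhds ha0, eventually_gt_nhds haε] with u h1 h2 h3
    exact laplace_aux φ hφ b hb M ε C hM h u h1 h2 h3
  have h3 := (hasDerivAt_const a (0:F)).congr_of_eventuallyEq h2
  have := h1.unique h3
  simpa using this

/-- vanishing of all exponential moments -/
theorem moments_unique {F : Type*} [NormedAddCommGroup F] [NormedSpace ℝ F] [CompleteSpace F]
    (g : ℝ → F) (hg : Continuous g) (hs : ∀ x, g x ≠ 0 → |x| ≤ 1)
    (h : ∀ k : ℕ, ∫ x, (Real.exp x - 1) ^ k • g x = 0) : ∀ x, g x = 0 := by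
  have hint : ∀ c : ℝ → ℝ, Continuous c → Integrable fun x => c x • g x := by
    intro c hc
    refine Continuous.integrable_of_hasCompactSupport (by fun_prop) ?_
    refine HasCompactSupport.intro (isCompact_Icc (a := (-1:ℝ)) (b := 1)) ?_
    intro x hx
    by_contra hne
    have := hs x (fun h0 => hne (by simp [h0]))
    exact hx (abs_le.1 this)
  have h2 : ∀ k : ℕ, ∫ x, Real.exp (k * x) • g x = 0 := by
    intro k
    have : ∀ x, Real.exp (k * x) • g x =
        ∑ j ∈ Finset.range (k+1), (k.choose j : ℝ) • ((Real.exp x - 1) ^ j • g x) := by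
      intro x
      rw [Real.exp_nat_mul]
      conv_lhs => rw [show Real.exp x = (Real.exp x - 1) + 1 by ring, add_pow]
      rw [Finset.sum_smul]
      refine Finset.sum_congr rfl fun j _ => ?_
      rw [smul_smul]; simp [mul_comm]
    simp_rw [this]
    rw [integral_finsetSum]
    · refine Finset.sum_eq_zero fun j _ => ?_
      rw [integral_smul, h j, smul_zero]
    · intro j _
      exact (hint (fun x => (Real.exp x - 1) ^ j) (by fun_prop)).smul _
  have key : ∀ a, -4 < a → a < 0 → g (a + 2) = 0 := by
    intro a h4 h0
    refine laplace_unique (fun y => g (y + 2)) (by fun_prop) (-4) (by norm_num) 1 5 0 one_pos ?_ a h4 h0 (by linarith)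
    intro k hk
    rw [intervalIntegral.integral_of_le (by norm_num), setIntegral_eq_integral_of_forall_compl_eq_zero]
    · have := integral_add_right_eq_self (μ := volume) (fun x => Real.exp (k * (x - 2)) • g x) 2
      have e : ∀ y : ℝ, Real.exp (k * 1 * y) • g (y + 2) = Real.exp (k * (y + 2 - 2)) • g (y + 2) := by
        intro y; congr 2; ring
      simp_rw [e]
      rw [this]
      have e2 : ∀ x, Real.exp (k * (x - 2)) • g x = Real.exp (-(k*2)) • (Real.exp (k * x) • g x) := by
        intro x; rw [smul_smul, ← Real.exp_add]; congr 2; ring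
      simp_rw [e2]
      rw [integral_smul, h2 k]; simp
    · intro x hx
      have : g (x + 2) = 0 := by
        by_contra hne
        have := abs_le.1 (hs _ hne)
        exact hx ⟨by linarith, by linarith⟩
      simp [this]
  intro x
  by_cases hx : |x| ≤ 1
  · have := abs_le.1 hx
    simpa using key (x - 2) (by linarith) (by linarith)
  · by_contra hne; exact hx (hs x hne)


abbrev Wd := Σ n : ℕ, (Fin n → Option (Fin 4))

def wcount (k : Wd) (j : Fin 4) : ℕ := (Finset.univ.filter fun i => k.2 i = some j).card

theorem word_expansion {E A : Type*} [NormedAddCommGroup E] [NormedSpace ℝ E]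
    [NormedAddCommGroup A] [NormedSpace ℝ A] [CompleteSpace A]
    (U : (Fin 4 → ℝ) × E → A) (hU : AnalyticAt ℝ U 0) :
    ∃ r > 0, r ≤ 1 ∧ ∃ C : ℝ, ∀ w : E, ‖w‖ ≤ r → ∃ u : Wd → A,
      Summable (fun k => ‖u k‖ * r ^ (wcount k 0 + wcount k 1 + wcount k 2 + wcount k 3)) ∧
      ∑' k, ‖u k‖ * r ^ (wcount k 0 + wcount k 1 + wcount k 2 + wcount k 3) ≤ C ∧
      ∀ z : Fin 4 → ℝ, (∀ j, |z j| ≤ r) →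
        HasSum (fun k => (z 0 ^ wcount k 0 * z 1 ^ wcount k 1 * z 2 ^ wcount k 2 * z 3 ^ wcount k 3) • u k)
          (U (z, w)) := by
  classical
  obtain ⟨p, R, hp⟩ := hU
  obtain ⟨ρ, hρ0, hρR⟩ := ENNReal.lt_iff_exists_nnreal_btwn.1 hp.r_pos
  have hρ0' : (0:ℝ) < ρ := by exact_mod_cast hρ0
  have hps := p.summable_norm_mul_pow (hρR.trans_le hp.r_le)
  set r : ℝ := min 1 (ρ / 6) with hr
  have hr0 : 0 < r := by positivity
  have hr5 : 5 * r ≤ ρ := by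
    have := min_le_right (1:ℝ) (ρ / 6)
    rw [← hr] at this; linarith
  refine ⟨r, hr0, min_le_left _ _, ∑' n, ‖p n‖ * (ρ:ℝ) ^ n, ?_⟩
  intro w hw
  let bv : Option (Fin 4) → (Fin 4 → ℝ) × E := fun o => o.elim (0, w) (fun j => (Pi.single j 1, 0))
  let u : Wd → A := fun k => p k.1 (fun i => bv (k.2 i))
  let e : Wd → ℕ := fun k => wcount k 0 + wcount k 1 + wcount k 2 + wcount k 3
  have hprod : ∀ (k : Wd) (cf : Option (Fin 4) → ℝ), ∏ i, cf (k.2 i) =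
      cf none ^ (Finset.univ.filter fun i => k.2 i = none).card *
      (cf (some 0) ^ wcount k 0 * cf (some 1) ^ wcount k 1 * cf (some 2) ^ wcount k 2 * cf (some 3) ^ wcount k 3) := by
    intro k cf
    rw [← Finset.prod_fiberwise (Finset.univ) k.2 (fun i => cf (k.2 i)), Fintype.prod_option, Fin.prod_univ_four]
    have : ∀ o, ∏ i with k.2 i = o, cf (k.2 i) = cf o ^ (Finset.univ.filter fun i => k.2 i = o).card := by
      intro o
      rw [← Finset.prod_const]
      exact Finset.prod_congr rfl fun i hi => by rw [(Finset.mem_filter.1 hi).2]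
    simp only [this, wcount]
  have hun : ∀ k : Wd, ‖u k‖ * r ^ e k ≤ ‖p k.1‖ * r ^ k.1 := by
    intro k
    have h1 : ‖u k‖ ≤ ‖p k.1‖ * ∏ i, ‖bv (k.2 i)‖ := (p k.1).le_opNorm _
    have h2 := hprod k (fun o => ‖bv o‖)
    have h3 := hprod k (fun o => r)
    have h4 : ∏ i, ‖bv (k.2 i)‖ ≤ r ^ (Finset.univ.filter fun i => k.2 i = none).card := by
      rw [h2]
      have hn : ‖bv none‖ ≤ r := by simpa [bv, Prod.norm_def] using hw
      have hs : ∀ j, ‖bv (some j)‖ = 1 := by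
        intro j
        simp [bv, Prod.norm_def, Pi.norm_single]
      simp only [hs, one_pow, mul_one]
      gcongr
    simp only [Finset.prod_const, Finset.card_univ, Fintype.card_fin] at h3
    calc ‖u k‖ * r ^ e k ≤ (‖p k.1‖ * r ^ (Finset.univ.filter fun i => k.2 i = none).card) * r ^ e k := by
          gcongr
          exact h1.trans (by gcongr)
      _ = ‖p k.1‖ * r ^ k.1 := by
          rw [h3]; simp only [e, pow_add]; ring
  have hsumw : HasSum (fun k : Wd => ‖p k.1‖ * r ^ k.1) (∑' n, ‖p n‖ * (5 * r) ^ n) := by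
    have hs5 : Summable (fun n => ‖p n‖ * (5 * r) ^ n) :=
      Summable.of_nonneg_of_le (fun n => by positivity) (fun n => by gcongr) hps
    have hin : ∀ n, HasSum (fun s : Fin n → Option (Fin 4) => ‖p n‖ * r ^ n) (‖p n‖ * (5 * r) ^ n) := by
      intro n
      have := hasSum_fintype (fun s : Fin n → Option (Fin 4) => ‖p n‖ * r ^ n)
      convert this using 1
      simp [Finset.sum_const, mul_pow]
      ring
    refine HasSum.sigma_of_hasSum hs5.hasSum hin ?_
    rw [summable_sigma_of_nonneg (fun k => by positivity)]
    exact ⟨fun n => (hin n).summable, by simpa only [(hin _).tsum_eq] using hs5⟩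
  have hsu : Summable (fun k => ‖u k‖ * r ^ e k) :=
    Summable.of_nonneg_of_le (fun k => by positivity) hun hsumw.summable
  refine ⟨u, hsu, ?_, ?_⟩
  · calc _ ≤ ∑' k : Wd, ‖p k.1‖ * r ^ k.1 := hsu.tsum_le_tsum hun hsumw.summable
      _ = _ := hsumw.tsum_eq
      _ ≤ _ := by
        refine Summable.tsum_le_tsum (fun n => by gcongr) ?_ hps
        exact Summable.of_nonneg_of_le (fun n => by positivity) (fun n => by gcongr) hps
  · intro z hz
    let cf : Option (Fin 4) → ℝ := fun o => o.elim 1 z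
    have hzw : (z, w) = ∑ o, cf o • bv o := by
      rw [Fintype.sum_option, Fin.sum_univ_four]
      simp only [cf, bv, Option.elim]
      ext j
      · fin_cases j <;> simp
      · simp
    have hmem : (z, w) ∈ Metric.eball (0 : (Fin 4 → ℝ) × E) R := by
      rw [mem_eball_zero_iff]
      refine lt_of_le_of_lt ?_ hρR
      have : ‖(z, w)‖ ≤ ρ := by
        have hrρ : r ≤ ρ := by linarith
        rw [Prod.norm_def]
        refine max_le ?_ (hw.trans hrρ)
        rw [pi_norm_le_iff_of_nonneg hρ0'.le]
        exact fun j => (hz j).trans hrρ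
      rw [← ofReal_norm]
      exact ENNReal.ofReal_le_of_le_toReal (by simpa using this)
    have h1 := hp.hasSum hmem
    rw [zero_add] at h1
    have hterm : ∀ k : Wd, (z 0 ^ wcount k 0 * z 1 ^ wcount k 1 * z 2 ^ wcount k 2 * z 3 ^ wcount k 3) • u k =
        p k.1 (fun i => cf (k.2 i) • bv (k.2 i)) := by
      intro k
      rw [ContinuousMultilinearMap.map_smul_univ, hprod k cf]
      simp [cf, u]
    refine HasSum.sigma_of_hasSum h1 ?_ ?_
    · intro n
      simp only [hterm]
      have := hasSum_fintype (fun s : Fin n → Option (Fin 4) => p n (fun i => cf (s i) • bv (s i)))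
      convert this using 1
      rw [hzw]
      exact ContinuousMultilinearMap.map_sum (p n) (fun _ o => cf o • bv o)
    · refine Summable.of_norm_bounded hsu fun k => ?_
      rw [norm_smul, mul_comm]
      simp only [norm_mul, norm_pow, Real.norm_eq_abs, e, pow_add]
      gcongr <;> apply hz


/-- weighted l1 norm of a polynomial -/
noncomputable def wnorm (r : ℝ) (p : Polynomial ℝ) : ℝ :=
  p.sum fun j c => |c| * r ^ j

noncomputable def thetaOp (p : Polynomial ℝ) : Polynomial ℝ :=
  (1 + Polynomial.X) * Polynomial.derivative p

theorem wnorm_eq (r : ℝ) (p : Polynomial ℝ) (K : ℕ) (hK : p.natDegree ≤ K) :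
    wnorm r p = ∑ j ∈ Finset.range (K+1), |p.coeff j| * r ^ j := by
  unfold wnorm
  exact Polynomial.sum_over_range' _ (by simp) _ (by omega)

theorem theta_natDegree (p : Polynomial ℝ) (K : ℕ) (hK : p.natDegree ≤ K) :
    (thetaOp p).natDegree ≤ K := by
  unfold thetaOp
  by_cases h0 : p.natDegree = 0
  · rw [Polynomial.natDegree_eq_zero] at h0
    obtain ⟨x, rfl⟩ := h0
    simp
  · refine Polynomial.natDegree_mul_le.trans ?_
    have h1 : (1 + Polynomial.X : Polynomial ℝ).natDegree ≤ 1 := by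
      rw [add_comm]; exact (Polynomial.natDegree_X_add_C (1:ℝ)).le
    have h2 := Polynomial.natDegree_derivative_lt h0
    omega

theorem theta_wnorm (r : ℝ) (hr : 0 < r) (p : Polynomial ℝ) (K : ℕ) (hK : p.natDegree ≤ K) :
    wnorm r (thetaOp p) ≤ (K * (1 + 1 / r)) * wnorm r p := by
  rw [wnorm_eq r _ K (theta_natDegree p K hK), wnorm_eq r p K hK]
  have hc : ∀ j, |(thetaOp p).coeff j| * r ^ j ≤
      |p.coeff (j+1)| * (j+1) * r ^ j + |p.coeff j| * j * r ^ j := by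
    intro j
    have : (thetaOp p).coeff j = p.coeff (j+1) * (j+1) + p.coeff j * j := by
      unfold thetaOp
      rw [add_mul, one_mul, Polynomial.coeff_add, Polynomial.coeff_derivative]
      cases j with
      | zero => simp
      | succ j => simp [Polynomial.coeff_X_mul, Polynomial.coeff_derivative]
    rw [this, ← add_mul]
    gcongr
    refine (abs_add_le _ _).trans (le_of_eq ?_)
    rw [abs_mul, abs_mul, abs_of_nonneg (by positivity : (0:ℝ) ≤ j + 1),
      abs_of_nonneg (by positivity : (0:ℝ) ≤ j)]
  refine (Finset.sum_le_sum fun j _ => hc j).trans ?_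
  rw [Finset.sum_add_distrib]
  have h1 : ∑ j ∈ Finset.range (K+1), |p.coeff j| * j * r ^ j ≤
      K * ∑ j ∈ Finset.range (K+1), |p.coeff j| * r ^ j := by
    rw [Finset.mul_sum]
    refine Finset.sum_le_sum fun j hj => ?_
    have : (j:ℝ) ≤ K := by
      have := Finset.mem_range.1 hj
      exact_mod_cast (by omega : j ≤ K)
    calc |p.coeff j| * j * r ^ j = j * (|p.coeff j| * r ^ j) := by ring
      _ ≤ _ := by gcongr
  have h2 : ∑ j ∈ Finset.range (K+1), |p.coeff (j+1)| * (j+1) * r ^ j ≤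
      K / r * ∑ j ∈ Finset.range (K+1), |p.coeff j| * r ^ j := by
    have hz : p.coeff (K+1) = 0 := Polynomial.coeff_eq_zero_of_natDegree_lt (by omega)
    rw [Finset.sum_range_succ, hz]
    simp only [abs_zero, zero_mul, add_zero]
    rw [Finset.sum_range_succ' (fun j => |p.coeff j| * r ^ j), mul_add, Finset.mul_sum]
    have : 0 ≤ K / r * (|p.coeff 0| * r ^ 0) := by positivity
    refine le_trans (Finset.sum_le_sum fun j hj => ?_) (le_add_of_nonneg_right this)
    have : (j:ℝ) + 1 ≤ K := by
      have := Finset.mem_range.1 hj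
      exact_mod_cast this
    calc |p.coeff (j+1)| * (j+1) * r ^ j = (j+1) / r * (|p.coeff (j+1)| * r ^ (j+1)) := by
            rw [pow_succ]; field_simp
      _ ≤ _ := by gcongr
  calc _ ≤ _ := add_le_add h2 h1
    _ = _ := by ring

theorem theta_iter (r : ℝ) (hr : 0 < r) (c α K : ℕ) (hα : α ≤ K) :
    (thetaOp^[c] (Polynomial.X ^ α)).natDegree ≤ K ∧
    wnorm r (thetaOp^[c] (Polynomial.X ^ α)) ≤ (K * (1 + 1 / r)) ^ c * r ^ α := by
  induction c with
  | zero =>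
    have h1 : (Polynomial.X ^ α : Polynomial ℝ).natDegree ≤ K := by simpa using hα
    refine ⟨h1, ?_⟩
    simp only [Function.iterate_zero, id, pow_zero, one_mul]
    unfold wnorm
    rw [← Polynomial.monomial_one_right_eq_X_pow, Polynomial.sum_monomial_index] <;> simp
  | succ c ih =>
    rw [Function.iterate_succ_apply']
    refine ⟨theta_natDegree _ _ ih.1, (theta_wnorm r hr _ K ih.1).trans ?_⟩
    have : (0:ℝ) ≤ K * (1 + 1/r) := by positivity
    refine (mul_le_mul_of_nonneg_left ih.2 this).trans (le_of_eq ?_)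
    rw [pow_succ]; ring

theorem theta_iter_eq (c α : ℕ) :
    thetaOp^[c] (Polynomial.X ^ α) = ∑ i ∈ Finset.range (α+1),
      Polynomial.C ((-1) ^ (α - i) * (α.choose i : ℝ) * (i:ℝ) ^ c) * (1 + Polynomial.X) ^ i := by
  induction c with
  | zero =>
    simp only [Function.iterate_zero, id, pow_zero, mul_one]
    conv_lhs => rw [show (Polynomial.X : Polynomial ℝ) = (1 + Polynomial.X) + (-1) by ring, add_pow]
    refine Finset.sum_congr rfl fun i _ => ?_
    simp only [map_mul, map_pow, map_neg, map_one, map_natCast]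
    ring
  | succ c ih =>
    rw [Function.iterate_succ_apply', ih]
    unfold thetaOp
    rw [Polynomial.derivative_sum, Finset.mul_sum]
    refine Finset.sum_congr rfl fun i _ => ?_
    rw [Polynomial.derivative_C_mul, Polynomial.derivative_pow]
    simp only [Polynomial.derivative_add, Polynomial.derivative_one, Polynomial.derivative_X, zero_add, mul_one,
      map_mul, map_pow, map_neg, map_one, map_natCast]
    cases i with
    | zero => simp
    | succ i => simp only [Nat.add_sub_cancel]; ring

theorem theta_exists (r : ℝ) (hr : 0 < r) (c α K : ℕ) (hα : α ≤ K) :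
    ∃ q : ℕ → ℝ, (∀ x : ℝ, ∑ i ∈ Finset.range (α+1), ((-1) ^ (α - i) * (α.choose i : ℝ) * (i:ℝ) ^ c) * (1 + x) ^ i
      = ∑ j ∈ Finset.range (K+1), q j * x ^ j) ∧
      ∑ j ∈ Finset.range (K+1), |q j| * r ^ j ≤ (K * (1 + 1 / r)) ^ c * r ^ α := by
  obtain ⟨h1, h2⟩ := theta_iter r hr c α K hα
  refine ⟨(thetaOp^[c] (Polynomial.X ^ α)).coeff, fun x => ?_, ?_⟩
  · rw [← Polynomial.eval_eq_sum_range' (by omega), theta_iter_eq, Polynomial.eval_finsetSum]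
    simp
  · rwa [wnorm_eq r _ K h1] at h2

set_option maxHeartbeats 2000000 in
theorem moment_estimate {Ω : Type*} [MeasurableSpace Ω] {μ : Measure Ω}
    {F : Type*} [NormedAddCommGroup F] [NormedSpace ℝ F] [CompleteSpace F]
    {ι : Type*} [Countable ι] (X Y : Ω → ℝ) (hX : Measurable X) (hY : Measurable Y)
    (g : Ω → F) (hg : Integrable g μ) (r : ℝ) (hr : 0 < r) (hr1 : r ≤ 1)
    (hsmall : ∀ ω, g ω ≠ 0 → |X ω| ≤ r / 2 ∧ |Y ω| ≤ r / 2)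
    (u : ι → (F →L[ℝ] F)) (a b c d : ι → ℕ) (hc : ∀ k, c k = 0 → u k = 0)
    (CU : ℝ) (hU : Summable fun k => ‖u k‖ * r ^ (a k + b k + c k + d k))
    (hUle : ∑' k, ‖u k‖ * r ^ (a k + b k + c k + d k) ≤ CU)
    (m : ℝ) (K : ℕ) (hm : 0 < m) (θ : ℝ) (hθ0 : 0 ≤ θ) (hθ1 : θ ≤ 1)
    (hK : K * (1 + 1 / r) / m ≤ θ * r) (hθ : θ * CU ≤ 1 / 2) (η : ℝ) (T : ℕ → ℕ → Ω → F)
    (hT : ∀ i ≤ K, ∀ l ≤ K, Integrable (T i l) μ)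
    (hTη : ∀ i ≤ K, ∀ l ≤ K, ‖∫ ω, T i l ω ∂μ‖ ≤ η)
    (hTsum : ∀ i ≤ K, ∀ l ≤ K, ∀ ω, HasSum (fun k => ((1 + X ω) ^ i * (1 + Y ω) ^ l *
        (X ω ^ a k * Y ω ^ b k * (i / m) ^ c k * (l / m) ^ d k)) • u k (g ω))
        (T i l ω - ((1 + X ω) ^ i * (1 + Y ω) ^ l) • g ω)) (α β : ℕ) :
    ‖∫ ω, (X ω ^ α * Y ω ^ β) • g ω ∂μ‖ ≤
      r ^ (α + β) * max (2 * (4 / r ^ 2) ^ K * η) ((1 / 2) ^ K * ∫ ω, ‖g ω‖ ∂μ) := by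
  -- integrability
  have hint : ∀ φ : ℝ × ℝ → ℝ, Continuous φ → Integrable (fun ω => φ (X ω, Y ω) • g ω) μ := by
    intro φ hφ
    obtain ⟨B, hB⟩ := ((isCompact_Icc (a := (-1:ℝ)) (b := 1)).prod
      (isCompact_Icc (a := (-1:ℝ)) (b := 1))).exists_bound_of_continuousOn hφ.continuousOn
    refine Integrable.mono' (hg.norm.const_mul B) ?_ (Filter.Eventually.of_forall fun ω => ?_)
    · exact (hφ.measurable.comp (hX.prodMk hY)).aestronglyMeasurable.smul hg.1
    · by_cases h0 : g ω = 0
      · simp [h0]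
      · obtain ⟨h1, h2⟩ := hsmall ω h0
        rw [norm_smul]
        gcongr
        apply hB
        rw [abs_le] at h1 h2
        exact ⟨⟨by dsimp only; linarith, by dsimp only; linarith⟩,
          ⟨by dsimp only; linarith, by dsimp only; linarith⟩⟩
  set N0 := ∫ ω, ‖g ω‖ ∂μ with hN0
  have hN0nn : 0 ≤ N0 := integral_nonneg fun _ => norm_nonneg _
  let ell : ℕ → ℕ → F := fun α β => ∫ ω, (X ω ^ α * Y ω ^ β) • g ω ∂μ
  have hapriori : ∀ α β, ‖ell α β‖ ≤ r ^ (α + β) * ((1/2) ^ (α + β) * N0) := by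
    intro α β
    rw [← mul_assoc, ← mul_pow, hN0, ← integral_const_mul]
    refine norm_integral_le_of_norm_le (hg.norm.const_mul _) (Filter.Eventually.of_forall fun ω => ?_)
    by_cases h0 : g ω = 0
    · simp [h0]
    · obtain ⟨h1, h2⟩ := hsmall ω h0
      rw [norm_smul, norm_mul, norm_pow, norm_pow, pow_add, mul_one_div]
      gcongr <;> assumption
  let R : ℕ × ℕ → ℝ := fun p => ‖ell p.1 p.2‖ / r ^ (p.1 + p.2)
  have hRle : ∀ p, R p ≤ (1/2) ^ (p.1 + p.2) * N0 := by
    intro p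
    rw [div_le_iff₀ (by positivity), mul_comm]
    exact hapriori _ _
  have hRbdd : BddAbove (Set.range R) := by
    refine ⟨N0, ?_⟩
    rintro _ ⟨p, rfl⟩
    refine (hRle p).trans ?_
    have : ((1:ℝ)/2) ^ (p.1 + p.2) ≤ 1 := pow_le_one₀ (by norm_num) (by norm_num)
    nlinarith
  set Λ := ⨆ p, R p with hΛ
  have hRΛ : ∀ p, R p ≤ Λ := fun p => le_ciSup hRbdd p
  have hellΛ : ∀ α β, ‖ell α β‖ ≤ r ^ (α + β) * Λ := by
    intro α β
    have := hRΛ (α, β)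
    rw [div_le_iff₀ (by positivity)] at this
    linarith
  have hΛ0 : 0 ≤ Λ := le_trans (by positivity) (hRΛ (0, 0))
  have hη0 : 0 ≤ η := (norm_nonneg _).trans (hTη 0 (Nat.zero_le _) 0 (Nat.zero_le _))
  have hmain : ∀ α ≤ K, ∀ β ≤ K, ‖ell α β‖ ≤ r ^ (α + β) * ((4 / r ^ 2) ^ K * η + Λ / 2) := by
    intro α hα β hβ
    let s : ℕ → ℝ := fun i => (-1) ^ (α - i) * (α.choose i : ℝ)
    let s' : ℕ → ℝ := fun l => (-1) ^ (β - l) * (β.choose l : ℝ)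
    let J : ι → ℕ → ℕ → F := fun k i l =>
      ∫ ω, ((1 + X ω) ^ i * (1 + Y ω) ^ l * (X ω ^ a k * Y ω ^ b k)) • g ω ∂μ
    have hKm : (K:ℝ) / m ≤ r := by
      have h1 : (K:ℝ) / m ≤ K * (1 + 1 / r) / m := by
        gcongr
        have : 0 ≤ 1 / r := by positivity
        nlinarith [(Nat.cast_nonneg K : (0:ℝ) ≤ K)]
      nlinarith
    have hJint : ∀ k i l, Integrable (fun ω => ((1 + X ω) ^ i * (1 + Y ω) ^ l * (X ω ^ a k * Y ω ^ b k)) • g ω) μ := by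
      intro k i l
      exact hint (fun p => (1 + p.1) ^ i * (1 + p.2) ^ l * (p.1 ^ a k * p.2 ^ b k)) (by fun_prop)
    have hHS : ∀ i ≤ K, ∀ l ≤ K, HasSum (fun k => ((i / m) ^ c k * (l / m) ^ d k) • u k (J k i l))
        (∫ ω, T i l ω ∂μ - ∫ ω, ((1 + X ω) ^ i * (1 + Y ω) ^ l) • g ω ∂μ) := by
      intro i hi l hl
      have him : (i:ℝ) / m ≤ r := le_trans (by gcongr) hKm
      have hlm : (l:ℝ) / m ≤ r := le_trans (by gcongr) hKm
      rw [← integral_sub (hT i hi l hl)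
        (hint (fun p => (1 + p.1) ^ i * (1 + p.2) ^ l) (by fun_prop))]
      have hF : ∀ k ω, ((1 + X ω) ^ i * (1 + Y ω) ^ l *
        (X ω ^ a k * Y ω ^ b k * (i / m) ^ c k * (l / m) ^ d k)) • u k (g ω) =
          (((i / m) ^ c k * (l / m) ^ d k) • u k)
            (((1 + X ω) ^ i * (1 + Y ω) ^ l * (X ω ^ a k * Y ω ^ b k)) • g ω) := by
        intro k ω
        rw [smul_apply, map_smul, smul_smul]
        congr 1; ring
      have hFint : ∀ k, Integrable (fun ω => ((1 + X ω) ^ i * (1 + Y ω) ^ l *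
        (X ω ^ a k * Y ω ^ b k * (i / m) ^ c k * (l / m) ^ d k)) • u k (g ω)) μ := by
        intro k
        simp_rw [hF]
        exact ContinuousLinearMap.integrable_comp _ (hJint k i l)
      have := hasSum_integral_of_summable_integral_norm hFint ?_
      · convert this using 1
        · ext k
          simp_rw [hF]
          rw [ContinuousLinearMap.integral_comp_comm _ (hJint k i l)]
          rfl
        · exact integral_congr_ae (Filter.Eventually.of_forall fun ω => (hTsum i hi l hl ω).tsum_eq.symm)
      · refine Summable.of_nonneg_of_le (fun k => integral_nonneg fun _ => norm_nonneg _) ?_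
          (hU.mul_right (2 ^ i * 2 ^ l * N0))
        intro k
        rw [hN0, ← integral_const_mul, ← integral_const_mul]
        refine integral_mono_of_nonneg (Filter.Eventually.of_forall fun _ => norm_nonneg _)
          ((hg.norm.const_mul _).const_mul _) (Filter.Eventually.of_forall fun ω => ?_)
        dsimp only
        by_cases h0 : g ω = 0
        · simp [h0]
        · obtain ⟨h1, h2⟩ := hsmall ω h0
          have e1 : |1 + X ω| ≤ 2 := by rw [abs_le] at *; constructor <;> linarith
          have e2 : |1 + Y ω| ≤ 2 := by rw [abs_le] at *; constructor <;> linarith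
          have e3 : |X ω| ≤ r := by linarith
          have e4 : |Y ω| ≤ r := by linarith
          rw [norm_smul]
          simp only [norm_mul, norm_pow, Real.norm_eq_abs]
          rw [abs_of_nonneg (by positivity : 0 ≤ (i:ℝ) / m), abs_of_nonneg (by positivity : 0 ≤ (l:ℝ) / m)]
          calc _ ≤ (2 ^ i * 2 ^ l * (r ^ a k * r ^ b k * r ^ c k * r ^ d k)) * (‖u k‖ * ‖g ω‖) := by
                gcongr
                exact (u k).le_opNorm _
            _ = _ := by ring
    -- combine
    have hrange : ∀ i ∈ Finset.range (α+1), i ≤ K := fun i hi => by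
      have := Finset.mem_range.1 hi; omega
    have hrange' : ∀ l ∈ Finset.range (β+1), l ≤ K := fun i hi => by
      have := Finset.mem_range.1 hi; omega
    have hH : HasSum (fun k => ∑ i ∈ Finset.range (α+1), ∑ l ∈ Finset.range (β+1),
        (s i * s' l) • (((i / m) ^ c k * (l / m) ^ d k) • u k (J k i l)))
        (∑ i ∈ Finset.range (α+1), ∑ l ∈ Finset.range (β+1),
        (s i * s' l) • (∫ ω, T i l ω ∂μ - ∫ ω, ((1 + X ω) ^ i * (1 + Y ω) ^ l) • g ω ∂μ)) :=
      hasSum_sum fun i hi => hasSum_sum fun l hl => (hHS i (hrange i hi) l (hrange' l hl)).const_smul _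
    have hbin : ∀ (α : ℕ) (x : ℝ), ∑ i ∈ Finset.range (α+1), ((-1) ^ (α - i) * (α.choose i : ℝ)) * (1 + x) ^ i = x ^ α := by
      intro α x
      conv_rhs => rw [show x = (1 + x) + (-1) by ring, add_pow]
      exact Finset.sum_congr rfl fun i _ => by ring
    have hell : ∑ i ∈ Finset.range (α+1), ∑ l ∈ Finset.range (β+1),
        (s i * s' l) • ∫ ω, ((1 + X ω) ^ i * (1 + Y ω) ^ l) • g ω ∂μ = ell α β := by
      have hi2 : ∀ i l, Integrable (fun ω => (s i * s' l) • ((1 + X ω) ^ i * (1 + Y ω) ^ l) • g ω) μ :=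
        fun i l => (hint (fun p => (1 + p.1) ^ i * (1 + p.2) ^ l) (by fun_prop)).smul _
      simp_rw [← integral_smul]
      have : ∀ i ∈ Finset.range (α+1), ∑ l ∈ Finset.range (β+1), ∫ ω, (s i * s' l) • ((1 + X ω) ^ i * (1 + Y ω) ^ l) • g ω ∂μ
          = ∫ ω, ∑ l ∈ Finset.range (β+1), (s i * s' l) • ((1 + X ω) ^ i * (1 + Y ω) ^ l) • g ω ∂μ :=
        fun i _ => (integral_finsetSum _ fun l _ => hi2 i l).symm
      rw [Finset.sum_congr rfl this, ← integral_finsetSum _ fun i _ => integrable_finsetSum _ fun l _ => hi2 i l]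
      refine integral_congr_ae (Filter.Eventually.of_forall fun ω => ?_)
      dsimp only
      rw [← hbin α (X ω), ← hbin β (Y ω), Finset.sum_mul_sum]
      simp_rw [Finset.sum_smul, smul_smul]
      refine Finset.sum_congr rfl fun i _ => Finset.sum_congr rfl fun l _ => ?_
      congr 1; simp only [s, s']; ring
    simp_rw [smul_sub, Finset.sum_sub_distrib] at hH
    rw [hell] at hH
    -- term bound
    have hterm : ∀ k, ‖∑ i ∈ Finset.range (α+1), ∑ l ∈ Finset.range (β+1),
        (s i * s' l) • (((i / m) ^ c k * (l / m) ^ d k) • u k (J k i l))‖ ≤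
        (‖u k‖ * r ^ (a k + b k + c k + d k)) * (θ * r ^ (α + β) * Λ) := by
      intro k
      by_cases hck : c k = 0
      · simp [hc k hck]
      obtain ⟨q, hq1, hq2⟩ := theta_exists r hr (c k) α K hα
      obtain ⟨q', hq1', hq2'⟩ := theta_exists r hr (d k) β K hβ
      have hL : ∑ i ∈ Finset.range (α+1), ∑ l ∈ Finset.range (β+1),
        (s i * s' l) • (((i / m) ^ c k * (l / m) ^ d k) • u k (J k i l)) =
          u k ((1 / m ^ (c k + d k)) • ∑ j ∈ Finset.range (K+1), ∑ j' ∈ Finset.range (K+1),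
            (q j * q' j') • ell (a k + j) (b k + j')) := by
        simp_rw [smul_smul, ← map_smul, ← map_sum]
        congr 1
        have hi1 : ∀ (z : ℝ) i l, Integrable (fun ω => z • ((1 + X ω) ^ i * (1 + Y ω) ^ l * (X ω ^ a k * Y ω ^ b k)) • g ω) μ :=
          fun z i l => (hJint k i l).smul _
        have hi2 : ∀ (z : ℝ) i l, Integrable (fun ω => z • (X ω ^ i * Y ω ^ l) • g ω) μ :=
          fun z i l => (hint (fun p => (p.1) ^ i * (p.2) ^ l) (by fun_prop)).smul _
        simp only [J, ell]
        simp_rw [← integral_smul]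
        have e1 : ∀ i ∈ Finset.range (α+1), ∑ l ∈ Finset.range (β+1), ∫ ω, (s i * s' l * ((i / m) ^ c k * (l / m) ^ d k)) • ((1 + X ω) ^ i * (1 + Y ω) ^ l * (X ω ^ a k * Y ω ^ b k)) • g ω ∂μ
          = ∫ ω, ∑ l ∈ Finset.range (β+1), (s i * s' l * ((i / m) ^ c k * (l / m) ^ d k)) • ((1 + X ω) ^ i * (1 + Y ω) ^ l * (X ω ^ a k * Y ω ^ b k)) • g ω ∂μ :=
          fun i _ => (integral_finsetSum _ fun l _ => hi1 _ i l).symm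
        have e2 : ∀ j ∈ Finset.range (K+1), ∑ j' ∈ Finset.range (K+1), ∫ ω, (q j * q' j') • (X ω ^ (a k + j) * Y ω ^ (b k + j')) • g ω ∂μ
          = ∫ ω, ∑ j' ∈ Finset.range (K+1), (q j * q' j') • (X ω ^ (a k + j) * Y ω ^ (b k + j')) • g ω ∂μ :=
          fun i _ => (integral_finsetSum _ fun l _ => hi2 _ _ _).symm
        rw [Finset.sum_congr rfl e1, Finset.sum_congr rfl e2,
          ← integral_finsetSum _ fun i _ => integrable_finsetSum _ fun l _ => hi1 _ i l,
          ← integral_finsetSum _ fun i _ => integrable_finsetSum _ fun l _ => hi2 _ _ _, ← integral_smul]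
        refine integral_congr_ae (Filter.Eventually.of_forall fun ω => ?_)
        dsimp only
        simp_rw [smul_smul, ← Finset.sum_smul, smul_smul]
        congr 1
        have h1 := hq1 (X ω)
        have h2 := hq1' (Y ω)
        have e3 : ∑ j ∈ Finset.range (K+1), ∑ j' ∈ Finset.range (K+1), (q j * q' j') * (X ω ^ (a k + j) * Y ω ^ (b k + j'))
            = (X ω ^ a k * Y ω ^ b k) * ((∑ j ∈ Finset.range (K+1), q j * X ω ^ j) * ∑ j' ∈ Finset.range (K+1), q' j' * Y ω ^ j') := by
          rw [Finset.sum_mul_sum, Finset.mul_sum]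
          refine Finset.sum_congr rfl fun j _ => ?_
          rw [Finset.mul_sum]
          refine Finset.sum_congr rfl fun j' _ => ?_
          rw [pow_add, pow_add]; ring
        rw [e3, ← h1, ← h2, Finset.sum_mul_sum, Finset.mul_sum, Finset.mul_sum]
        refine Finset.sum_congr rfl fun i _ => ?_
        rw [Finset.mul_sum, Finset.mul_sum]
        refine Finset.sum_congr rfl fun l _ => ?_
        simp only [s, s', pow_add, mul_inv, div_eq_mul_inv]
        ring
      rw [hL]
      refine ((u k).le_opNorm _).trans ?_
      rw [mul_assoc ‖u k‖]
      refine mul_le_mul_of_nonneg_left ?_ (norm_nonneg _)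
      have hB : ‖∑ j ∈ Finset.range (K+1), ∑ j' ∈ Finset.range (K+1),
            (q j * q' j') • ell (a k + j) (b k + j')‖ ≤
            r ^ (a k + b k) * Λ * (((K * (1 + 1 / r)) ^ c k * r ^ α) * ((K * (1 + 1 / r)) ^ d k * r ^ β)) := by
        calc _ ≤ ∑ j ∈ Finset.range (K+1), ∑ j' ∈ Finset.range (K+1),
              r ^ (a k + b k) * Λ * ((|q j| * r ^ j) * (|q' j'| * r ^ j')) := by
              refine norm_sum_le_of_le _ fun j _ => norm_sum_le_of_le _ fun j' _ => ?_
              rw [norm_smul, norm_mul]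
              refine (mul_le_mul_of_nonneg_left (hellΛ _ _) (by positivity)).trans (le_of_eq ?_)
              simp only [Real.norm_eq_abs, pow_add]; ring
          _ = r ^ (a k + b k) * Λ * ((∑ j ∈ Finset.range (K+1), |q j| * r ^ j) * (∑ j' ∈ Finset.range (K+1), |q' j'| * r ^ j')) := by
              rw [Finset.sum_mul_sum, Finset.mul_sum]
              exact Finset.sum_congr rfl fun j _ => (Finset.mul_sum _ _ _).symm
          _ ≤ _ := by
              refine mul_le_mul_of_nonneg_left ?_ (by positivity)
              refine mul_le_mul hq2 hq2' (Finset.sum_nonneg fun _ _ => by positivity) (by positivity)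
      rw [norm_smul, Real.norm_eq_abs, abs_of_nonneg (by positivity)]
      have hρ : (K * (1 + 1 / r) / m) ^ (c k + d k) ≤ θ * r ^ (c k + d k) := by
        calc _ ≤ (θ * r) ^ (c k + d k) := pow_le_pow_left₀ (by positivity) hK _
          _ = θ ^ (c k + d k) * r ^ (c k + d k) := mul_pow _ _ _
          _ ≤ _ := by
            gcongr
            exact pow_le_of_le_one hθ0 hθ1 (by omega)
      calc _ ≤ 1 / m ^ (c k + d k) * _ := mul_le_mul_of_nonneg_left hB (by positivity)
        _ = r ^ (a k + b k) * Λ * r ^ (α + β) * (K * (1 + 1 / r) / m) ^ (c k + d k) := by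
          rw [div_pow, mul_pow, mul_pow, mul_pow, pow_add r α, pow_add m, pow_add _ (c k), pow_add _ (c k)]
          ring
        _ ≤ r ^ (a k + b k) * Λ * r ^ (α + β) * (θ * r ^ (c k + d k)) := by gcongr
        _ = _ := by simp only [pow_add]; ring
    have hB1 := tsum_of_norm_bounded (hU.mul_right (θ * r ^ (α + β) * Λ)).hasSum hterm
    rw [hH.tsum_eq, tsum_mul_right] at hB1
    have hB2 : (∑' k, ‖u k‖ * r ^ (a k + b k + c k + d k)) * (θ * r ^ (α + β) * Λ) ≤ r ^ (α + β) * (Λ / 2) := by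
      calc _ ≤ CU * (θ * r ^ (α + β) * Λ) := by gcongr
        _ = (θ * CU) * (r ^ (α + β) * Λ) := by ring
        _ ≤ 1 / 2 * (r ^ (α + β) * Λ) := by gcongr
        _ = _ := by ring
    have hchoose : ∀ α : ℕ, ∑ i ∈ Finset.range (α+1), |(-1) ^ (α - i) * (α.choose i : ℝ)| = 2 ^ α := by
      intro α
      have := Nat.sum_range_choose α
      have h2 : ((∑ i ∈ Finset.range (α+1), α.choose i : ℕ) : ℝ) = 2 ^ α := by rw [this]; norm_num
      rw [← h2]; push_cast
      refine Finset.sum_congr rfl fun i _ => ?_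
      rw [abs_mul, abs_pow]; simp
    have hB3 : ‖∑ i ∈ Finset.range (α+1), ∑ l ∈ Finset.range (β+1), (s i * s' l) • ∫ ω, T i l ω ∂μ‖ ≤
        r ^ (α + β) * ((4 / r ^ 2) ^ K * η) := by
      calc _ ≤ ∑ i ∈ Finset.range (α+1), ∑ l ∈ Finset.range (β+1), |s i| * |s' l| * η := by
            refine norm_sum_le_of_le _ fun i hi => norm_sum_le_of_le _ fun l hl => ?_
            rw [norm_smul, norm_mul]
            exact mul_le_mul_of_nonneg_left (hTη i (hrange i hi) l (hrange' l hl)) (by positivity)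
        _ = 2 ^ α * 2 ^ β * η := by
            rw [← hchoose α, ← hchoose β, Finset.sum_mul_sum, Finset.sum_mul]
            exact Finset.sum_congr rfl fun j _ => (Finset.sum_mul _ _ _).symm
        _ = r ^ (α + β) * ((2 / r) ^ α * (2 / r) ^ β * η) := by
            rw [div_pow, div_pow, pow_add]; field_simp
        _ ≤ r ^ (α + β) * ((2 / r) ^ K * (2 / r) ^ K * η) := by
            have : 1 ≤ 2 / r := by rw [le_div_iff₀ hr]; linarith
            gcongr <;> assumption
        _ = _ := by
            rw [← mul_pow, show 2 / r * (2 / r) = 4 / r ^ 2 by field_simp; norm_num]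
    calc ‖ell α β‖ = ‖(∑ i ∈ Finset.range (α+1), ∑ l ∈ Finset.range (β+1), (s i * s' l) • ∫ ω, T i l ω ∂μ)
          - (∑ i ∈ Finset.range (α+1), ∑ l ∈ Finset.range (β+1), (s i * s' l) • ∫ ω, T i l ω ∂μ - ell α β)‖ := by
            congr 1; abel
      _ ≤ _ := norm_sub_le _ _
      _ ≤ r ^ (α + β) * ((4 / r ^ 2) ^ K * η) + r ^ (α + β) * (Λ / 2) := add_le_add hB3 (hB1.trans hB2)
      _ = _ := by ring
  have hfin : Λ ≤ max (2 * (4 / r ^ 2) ^ K * η) ((1 / 2) ^ K * N0) := by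
    have h1 : Λ ≤ max ((4 / r ^ 2) ^ K * η + Λ / 2) ((1 / 2) ^ K * N0) := by
      refine ciSup_le fun p => ?_
      by_cases hp : p.1 ≤ K ∧ p.2 ≤ K
      · refine le_max_of_le_left ?_
        rw [div_le_iff₀ (by positivity), mul_comm]
        exact hmain _ hp.1 _ hp.2
      · refine le_max_of_le_right ((hRle p).trans ?_)
        gcongr ?_ * _
        exact pow_le_pow_of_le_one (by norm_num) (by norm_num) (by omega)
    rcases le_max_iff.1 h1 with h | h
    · refine le_max_of_le_left ?_
      linarith
    · exact le_max_of_le_right h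
  exact (hellΛ α β).trans (mul_le_mul_of_nonneg_left hfin (by positivity))


theorem box_int {α F : Type*} [MeasurableSpace α] {μ : Measure α} [NormedAddCommGroup F] [NormedSpace ℝ F]
    (φ : α → F) (hφ : AEStronglyMeasurable φ μ) (s : Set α) (hs : MeasurableSet s) (hμ : μ s ≠ ⊤) (c : ℝ)
    (h0 : ∀ p, p ∉ s → φ p = 0) (hc : ∀ p ∈ s, ‖φ p‖ ≤ c) :
    Integrable φ μ ∧ ‖∫ p, φ p ∂μ‖ ≤ c * μ.real s := by
  constructor
  · have h1 : IntegrableOn φ s μ :=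
      IntegrableOn.of_bound (lt_top_iff_ne_top.2 hμ) hφ.restrict c
        ((ae_restrict_iff' hs).2 (Filter.Eventually.of_forall hc))
    exact (integrableOn_iff_integrable_of_support_subset (fun p hp => by
      by_contra hps
      exact hp (h0 p hps))).1 h1
  · rw [← setIntegral_eq_integral_of_forall_compl_eq_zero h0]
    exact norm_setIntegral_le_of_norm_le_const (lt_top_iff_ne_top.2 hμ) hc

theorem cut_zero {F : Type*} [NormedAddCommGroup F] [NormedSpace ℝ F]
    (Ψ : ℝ × ℝ → F) (hΨ : Continuous Ψ) (hs : ∀ x y, Ψ (x, y) ≠ 0 → |x| ≤ 1 ∧ -2 ≤ y ∧ y ≤ 0)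
    (S : ℝ) (hS : ∀ p, ‖Ψ p‖ ≤ S)
    (ξ δ j : ℝ) (hξ : |ξ| ≤ 1) (hj : 0 ≤ j)
    (hl : ∀ η, -δ ≤ η → ∫ x, Ψ (x, ξ * x + η) = 0)
    (hi : Integrable (Set.indicator {p : ℝ × ℝ | -δ ≤ p.2 - ξ * p.1} fun p => Real.exp (j * (p.2 - ξ * p.1)) • Ψ p)) :
    ∫ p, (Set.indicator {p : ℝ × ℝ | -δ ≤ p.2 - ξ * p.1} fun p => Real.exp (j * (p.2 - ξ * p.1)) • Ψ p) p = 0 := by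
  classical
  rw [Measure.volume_eq_prod] at hi ⊢
  rw [integral_prod _ hi]
  have hS0 : 0 ≤ S := (norm_nonneg _).trans (hS 0)
  let Φ : ℝ → ℝ → F := fun x η => if -δ ≤ η then Real.exp (j * η) • Ψ (x, ξ * x + η) else 0
  have h1 : ∀ x, ∫ y, (Set.indicator {p : ℝ × ℝ | -δ ≤ p.2 - ξ * p.1} fun p => Real.exp (j * (p.2 - ξ * p.1)) • Ψ p) (x, y)
      = ∫ η, Φ x η := by
    intro x
    rw [← integral_add_left_eq_self _ (ξ * x)]
    congr 1
    ext η
    simp [Set.indicator, Φ]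
    split_ifs <;> first | rfl | (exfalso; linarith)
  simp_rw [h1]
  have hΦ : Integrable (Function.uncurry Φ) (volume.prod volume) := by
    refine (box_int _ ?_ (Set.Icc (-1) 1 ×ˢ Set.Icc (-3) 1) (by measurability) ?_ (Real.exp j * S) ?_ ?_).1
    · have : Function.uncurry Φ = Set.indicator {p : ℝ × ℝ | -δ ≤ p.2} (fun p => Real.exp (j * p.2) • Ψ (p.1, ξ * p.1 + p.2)) := by
        ext p
        simp [Function.uncurry, Φ, Set.indicator]
      rw [this]
      refine AEStronglyMeasurable.indicator ?_ ?_
      · exact Continuous.aestronglyMeasurable (by fun_prop)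
      · exact measurableSet_le measurable_const measurable_snd
    · rw [Measure.prod_prod]
      simp
      exact ENNReal.mul_ne_top (by simp) (by simp)
    · rintro ⟨x, η⟩ hp
      simp only [Function.uncurry, Φ]
      by_cases h : Ψ (x, ξ * x + η) = 0
      · simp [h]
      · exfalso
        apply hp
        obtain ⟨a, b, c⟩ := hs _ _ h
        have h3 : |ξ * x| ≤ 1 := by
          rw [abs_mul]
          exact mul_le_one₀ hξ (abs_nonneg _) a
        rw [abs_le] at a h3
        refine ⟨⟨a.1, a.2⟩, ⟨?_, ?_⟩⟩ <;> simp <;> linarith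
    · rintro ⟨x, η⟩ ⟨-, hp⟩
      have hp2 := hp.2
      simp only [Function.uncurry, Φ]
      split_ifs
      · rw [norm_smul, Real.norm_eq_abs, Real.abs_exp]
        gcongr
        · simp at hp2; nlinarith
        · exact hS _
      · simp; positivity
  rw [integral_integral_swap hΦ]
  have h2 : ∀ η, ∫ x, Φ x η = 0 := by
    intro η
    simp only [Φ]
    split_ifs with h
    · rw [integral_smul, hl η h, smul_zero]
    · simp
  simp [h2]

def bx : Set (ℝ × ℝ) := Set.Icc (-1) 1 ×ˢ Set.Icc (-2) 0

theorem bx_meas : MeasurableSet bx := measurableSet_Icc.prod measurableSet_Icc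

theorem bx_fin : (volume : Measure (ℝ × ℝ)) bx ≠ ⊤ :=
  ((isCompact_Icc (a := (-1:ℝ)) (b := 1)).prod (isCompact_Icc (a := (-2:ℝ)) (b := 0))).measure_lt_top.ne

theorem cut_est {F : Type*} [NormedAddCommGroup F] [NormedSpace ℝ F]
    (Ψ : ℝ × ℝ → F) (hΨ : Continuous Ψ) (hs : ∀ x y, Ψ (x, y) ≠ 0 → |x| ≤ 1 ∧ -2 ≤ y ∧ y ≤ 0)
    (S : ℝ) (hS : ∀ p, ‖Ψ p‖ ≤ S)
    (ξ δ j : ℝ) (hξ : |ξ| ≤ 1) (hξδ : |ξ| ≤ δ / 2) (hj : 0 ≤ j)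
    (hl : ∀ η, -δ ≤ η → ∫ x, Ψ (x, ξ * x + η) = 0) :
    Integrable (Set.indicator {p : ℝ × ℝ | -δ ≤ p.2} fun p => Real.exp (j * (p.2 - ξ * p.1)) • Ψ p) ∧
    ‖∫ p, (Set.indicator {p : ℝ × ℝ | -δ ≤ p.2} fun p => Real.exp (j * (p.2 - ξ * p.1)) • Ψ p) p‖ ≤
      (Real.exp (- (j * (δ / 2))) * S) * (volume : Measure (ℝ × ℝ)).real bx := by
  have hS0 : 0 ≤ S := (norm_nonneg _).trans (hS 0)
  have hb : ∀ p, p ∉ bx → Ψ p = 0 := by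
    rintro ⟨x, y⟩ hp
    by_contra h
    obtain ⟨a, b, c⟩ := hs _ _ h
    exact hp ⟨abs_le.1 a, b, c⟩
  have hxx : ∀ p ∈ bx, |ξ * p.1| ≤ |ξ| := by
    intro p hp
    rw [abs_mul]
    exact mul_le_of_le_one_right (abs_nonneg _) (abs_le.2 hp.1)
  have hcont : Continuous fun p : ℝ × ℝ => Real.exp (j * (p.2 - ξ * p.1)) • Ψ p := by fun_prop
  have hm1 : MeasurableSet {p : ℝ × ℝ | -δ ≤ p.2} := measurableSet_le measurable_const measurable_snd
  have hm2 : MeasurableSet {p : ℝ × ℝ | -δ ≤ p.2 - ξ * p.1} :=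
    measurableSet_le measurable_const (by fun_prop)
  have hbd : ∀ p ∈ bx, ‖Real.exp (j * (p.2 - ξ * p.1)) • Ψ p‖ ≤ Real.exp j * S := by
    intro p hp
    rw [norm_smul, Real.norm_eq_abs, Real.abs_exp]
    have h1 := hxx p hp
    have h2 : p.2 ≤ 0 := hp.2.2
    gcongr
    · have := (abs_le.1 (h1.trans hξ)).1
      nlinarith
    · exact hS _
  have key : ∀ s : Set (ℝ × ℝ), MeasurableSet s →
      Integrable (Set.indicator s fun p => Real.exp (j * (p.2 - ξ * p.1)) • Ψ p) := by
    intro s hs'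
    refine (box_int _ (hcont.aestronglyMeasurable.indicator hs') bx bx_meas bx_fin (Real.exp j * S) ?_ ?_).1
    · intro p hp
      simp [Set.indicator, hb p hp]
    · intro p hp
      exact (norm_indicator_le_norm_self _ _).trans (hbd p hp)
  refine ⟨key _ hm1, ?_⟩
  have h0 := cut_zero Ψ hΨ hs S hS ξ δ j hξ hj hl (key _ hm2)
  rw [← sub_zero (∫ p, _), ← h0, ← integral_sub (key _ hm1) (key _ hm2)]
  refine (box_int _ ((key _ hm1).sub (key _ hm2)).1 bx bx_meas bx_fin _ ?_ ?_).2
  · intro p hp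
    simp [Set.indicator, hb p hp]
  · intro p hp
    have h1 := abs_le.1 (hxx p hp)
    rw [Pi.sub_apply]
    by_cases c1 : -δ ≤ p.2 <;> by_cases c2 : -δ ≤ p.2 - ξ * p.1
    · rw [Set.indicator_of_mem (by exact c1), Set.indicator_of_mem (by exact c2), sub_self, norm_zero]
      positivity
    · rw [Set.indicator_of_mem (by exact c1), Set.indicator_of_notMem (by exact c2), sub_zero, norm_smul,
        Real.norm_eq_abs, Real.abs_exp]
      gcongr
      · have := abs_nonneg ξ
        nlinarith
      · exact hS _
    · rw [Set.indicator_of_notMem (by exact c1), Set.indicator_of_mem (by exact c2), zero_sub, norm_neg, norm_smul,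
        Real.norm_eq_abs, Real.abs_exp]
      gcongr
      · nlinarith
      · exact hS _
    · rw [Set.indicator_of_notMem (by exact c1), Set.indicator_of_notMem (by exact c2), sub_self, norm_zero]
      positivity

theorem core_mom {F : Type*} [NormedAddCommGroup F] [NormedSpace ℝ F] [CompleteSpace F]
    (V : ℝ → ℝ → ℝ → (F →L[ℝ] F)) (hV : Continuous fun p : ℝ × ℝ × ℝ => V p.1 p.2.1 p.2.2)
    (hV0 : ∀ x y, IsUnit (V x y 0))
    (h : ℝ × ℝ → F) (hh : Continuous h)
    (hs : ∀ x y, h (x, y) ≠ 0 → |x| ≤ 1 ∧ -2 ≤ y ∧ y ≤ 0 ∧ x ^ 2 ≤ -2 * y)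
    (δ0 : ℝ)
    (hline : ∀ ξ η, |ξ| < δ0 → |η| < δ0 → ∫ x, V x (ξ * x + η) ξ (h (x, ξ * x + η)) = 0)
    (r : ℝ) (hr : 0 < r) (hr1 : r ≤ 1)
    {ι : Type*} [Countable ι] (u : ι → (F →L[ℝ] F)) (a b c d : ι → ℕ) (hc : ∀ k, c k = 0 → u k = 0)
    (CU : ℝ) (hU : Summable fun k => ‖u k‖ * r ^ (a k + b k + c k + d k))
    (hUle : ∑' k, ‖u k‖ * r ^ (a k + b k + c k + d k) ≤ CU)
    (hexp : ∀ z0 z1 z2 z3 : ℝ, |z0| ≤ r → |z1| ≤ r → |z2| ≤ r → |z3| ≤ r →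
      HasSum (fun k => (z0 ^ a k * z1 ^ b k * z2 ^ c k * z3 ^ d k) • u k)
        (V (Real.log (1 + z0)) (Real.log (1 + z1)) (-z2 / (1 + z3)) *
          Ring.inverse (V (Real.log (1 + z0)) (Real.log (1 + z1)) 0) - 1))
    (δ1 : ℝ) (hδ1 : 0 < δ1) (hδ10 : δ1 < δ0)
    (hδr : ∀ x y : ℝ, -δ1 ≤ y → y ≤ 0 → x ^ 2 ≤ -2 * y → |Real.exp x - 1| ≤ r / 2 ∧ |Real.exp y - 1| ≤ r / 2)
    (θ : ℝ) (hθ0 : 0 ≤ θ) (hθ1 : θ ≤ 1) (hθ : θ * CU ≤ 1 / 2)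
    (M : ℕ) (hM : 0 < M) (hMθ : (1 + 1 / r) / M ≤ θ * r) (hMr : 1 / (M:ℝ) ≤ r)
    (hMδ0 : 1 / (M:ℝ) < δ0) (hMδ1 : 1 / (M:ℝ) ≤ δ1 / 2)
    (hMe : 4 / r ^ 2 * Real.exp (-(M * (δ1 / 2))) ≤ 1 / 2) :
    ∃ C : ℝ, ∀ K : ℕ, 1 ≤ K → ∀ α : ℕ,
      Integrable (fun p : ℝ × ℝ => (Real.exp p.1 - 1) ^ α •
        Set.indicator {p : ℝ × ℝ | -δ1 ≤ p.2} (fun p => Real.exp (K * M * p.2) • V p.1 p.2 0 (h p)) p) ∧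
      ‖∫ p : ℝ × ℝ, (Real.exp p.1 - 1) ^ α •
        Set.indicator {p : ℝ × ℝ | -δ1 ≤ p.2} (fun p => Real.exp (K * M * p.2) • V p.1 p.2 0 (h p)) p‖
        ≤ C * (1 / 2) ^ K := by
  have hM' : (0:ℝ) < M := by exact_mod_cast hM
  have hMone : (1:ℝ) ≤ M := by exact_mod_cast hM
  have hM1 : 1 / (M:ℝ) ≤ 1 := by rw [div_le_one hM']; exact hMone
  have hΨc : ∀ ξ, Continuous fun p : ℝ × ℝ => V p.1 p.2 ξ (h p) := by
    intro ξ
    have : Continuous fun p : ℝ × ℝ => V p.1 p.2 ξ :=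
      hV.comp (by fun_prop : Continuous fun p : ℝ × ℝ => (p.1, p.2, ξ))
    exact this.clm_apply hh
  have hΨs : ∀ ξ x y, V x y ξ (h (x, y)) ≠ 0 → |x| ≤ 1 ∧ -2 ≤ y ∧ y ≤ 0 := by
    intro ξ x y hne
    have : h (x, y) ≠ 0 := fun h0 => hne (by simp [h0])
    obtain ⟨h1, h2, h3, -⟩ := hs x y this
    exact ⟨h1, h2, h3⟩
  have hb : ∀ p, p ∉ bx → h p = 0 := by
    rintro ⟨x, y⟩ hp
    by_contra h0
    obtain ⟨a, b, c, -⟩ := hs _ _ h0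
    exact hp ⟨abs_le.1 a, b, c⟩
  obtain ⟨S, hS0, hS⟩ : ∃ S, 0 ≤ S ∧ ∀ ξ, |ξ| ≤ 1 → ∀ p : ℝ × ℝ, ‖V p.1 p.2 ξ (h p)‖ ≤ S := by
    have hcomp : IsCompact (bx ×ˢ Set.Icc (-1:ℝ) 1) :=
      ((isCompact_Icc).prod isCompact_Icc).prod isCompact_Icc
    have hct : Continuous fun q : (ℝ × ℝ) × ℝ => V q.1.1 q.1.2 q.2 (h q.1) := by
      have : Continuous fun q : (ℝ × ℝ) × ℝ => V q.1.1 q.1.2 q.2 :=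
        hV.comp (by fun_prop : Continuous fun q : (ℝ × ℝ) × ℝ => (q.1.1, q.1.2, q.2))
      exact this.clm_apply (hh.comp continuous_fst)
    obtain ⟨S, hS⟩ := hcomp.exists_bound_of_continuousOn hct.continuousOn
    refine ⟨max S 0, le_max_right _ _, fun ξ hξ p => ?_⟩
    by_cases hp : p ∈ bx
    · exact (hS (p, ξ) ⟨hp, abs_le.1 hξ⟩).trans (le_max_left _ _)
    · simp [hb p hp]
  set vol := (volume : Measure (ℝ × ℝ)).real bx with hvol
  have hvol0 : 0 ≤ vol := measureReal_nonneg
  refine ⟨2 * (S * vol), ?_⟩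
  intro K hK1 α
  have hK' : (1:ℝ) ≤ K := by exact_mod_cast hK1
  have hm1 : MeasurableSet {p : ℝ × ℝ | -δ1 ≤ p.2} := measurableSet_le measurable_const measurable_snd
  set m : ℝ := K * M with hm
  have hm0 : 0 < m := by positivity
  set g : ℝ × ℝ → F := Set.indicator {p : ℝ × ℝ | -δ1 ≤ p.2} (fun p => Real.exp (m * p.2) • V p.1 p.2 0 (h p)) with hg
  have hgz : ∀ p, h p = 0 → g p = 0 := by
    intro p hp
    simp [hg, Set.indicator, hp]
  have hgm : AEStronglyMeasurable g volume := by
    refine AEStronglyMeasurable.indicator ?_ hm1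
    exact (Continuous.smul (by fun_prop) (hΨc 0)).aestronglyMeasurable
  have hgn : ∀ p ∈ bx, ‖g p‖ ≤ S := by
    intro p hp
    refine (norm_indicator_le_norm_self _ _).trans ?_
    rw [norm_smul, Real.norm_eq_abs, Real.abs_exp]
    have h1 : Real.exp (m * p.2) ≤ 1 := by
      rw [Real.exp_le_one_iff]
      exact mul_nonpos_of_nonneg_of_nonpos hm0.le hp.2.2
    calc _ ≤ 1 * S := by
          gcongr
          exact hS 0 (by simp) p
      _ = S := one_mul _
  have hgi : Integrable g volume :=
    (box_int g hgm bx bx_meas bx_fin S (fun p hp => hgz p (hb p hp)) hgn).1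
  have hgint : ∫ p, ‖g p‖ ≤ S * vol := by
    have := (box_int (fun p => ‖g p‖) hgm.norm bx bx_meas bx_fin S (fun p hp => by simp [hgz p (hb p hp)])
      (fun p hp => by rw [norm_norm]; exact hgn p hp)).2
    exact (le_abs_self _).trans this
  have hgsm : ∀ p : ℝ × ℝ, g p ≠ 0 → |Real.exp p.1 - 1| ≤ r / 2 ∧ |Real.exp p.2 - 1| ≤ r / 2 := by
    intro p hp
    have h1 : -δ1 ≤ p.2 := by
      by_contra hcon
      exact hp (Set.indicator_of_notMem (by exact hcon) _)
    have h2 : h (p.1, p.2) ≠ 0 := fun h0 => hp (hgz p h0)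
    obtain ⟨-, -, h3, h4⟩ := hs _ _ h2
    exact hδr _ _ h1 h3 h4
  have hint2 : Integrable (fun p : ℝ × ℝ => (Real.exp p.1 - 1) ^ α • g p) := by
    have hms : AEStronglyMeasurable (fun p : ℝ × ℝ => (Real.exp p.1 - 1) ^ α • g p) volume :=
      (Continuous.aestronglyMeasurable (by fun_prop)).smul hgm
    refine (box_int _ hms bx bx_meas bx_fin (1 * S) (fun p hp => by simp [hgz p (hb p hp)]) ?_).1
    intro p hp
    by_cases hgp : g p = 0
    · simp [hgp, hS0]
    · rw [norm_smul, norm_pow, Real.norm_eq_abs]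
      gcongr
      · exact pow_le_one₀ (abs_nonneg _) (((hgsm p hgp).1).trans (by linarith))
      · exact hgn p hp
  refine ⟨hint2, ?_⟩
  let ξ : ℕ → ℕ → ℝ := fun i l => -(i / (m + l))
  have hξM : ∀ i ≤ K, ∀ l, |ξ i l| ≤ 1 / M := by
    intro i hi l
    have hi' : (i:ℝ) ≤ K := by exact_mod_cast hi
    simp only [ξ, abs_neg]
    rw [abs_of_nonneg (by positivity), div_le_div_iff₀ (by positivity) hM']
    have : (i:ℝ) * M ≤ K * M := by gcongr
    have h2 : (0:ℝ) ≤ l := by positivity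
    rw [hm]; linarith
  let T : ℕ → ℕ → ℝ × ℝ → F := fun i l =>
    Set.indicator {p : ℝ × ℝ | -δ1 ≤ p.2} fun p => Real.exp ((m + l) * (p.2 - ξ i l * p.1)) • V p.1 p.2 (ξ i l) (h p)
  have hcut : ∀ i ≤ K, ∀ l ≤ K, Integrable (T i l) ∧ ‖∫ p, T i l p‖ ≤ Real.exp (-(m * (δ1 / 2))) * S * vol := by
    intro i hi l hl
    have hx := hξM i hi l
    have hl0 : (0:ℝ) ≤ l := by positivity
    obtain ⟨h1, h2⟩ := cut_est (fun p => V p.1 p.2 (ξ i l) (h p)) (hΨc _) (fun x y => hΨs _ x y) S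
      (hS _ (hx.trans hM1)) (ξ i l) δ1 (m + l) (hx.trans hM1) (hx.trans hMδ1) (by positivity) (by
        intro η hη
        by_cases hη2 : η < δ0
        · exact hline _ _ (hx.trans_lt hMδ0) (abs_lt.2 ⟨by linarith, hη2⟩)
        · have hz : ∀ x, h (x, ξ i l * x + η) = 0 := by
            intro x
            by_contra hne
            obtain ⟨hx1, -, hy, -⟩ := hs _ _ hne
            have : |ξ i l * x| ≤ 1 / M := by
              rw [abs_mul]
              exact (mul_le_of_le_one_right (abs_nonneg _) hx1).trans hx
            have := (abs_le.1 this).1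
            linarith
          simp [hz])
    refine ⟨h1, h2.trans ?_⟩
    gcongr
    linarith
  have hest := moment_estimate (fun p : ℝ × ℝ => Real.exp p.1 - 1) (fun p : ℝ × ℝ => Real.exp p.2 - 1)
    (by fun_prop) (by fun_prop) g hgi r hr hr1 hgsm u a b c d hc CU hU hUle m K hm0 θ hθ0 hθ1
    (by
      have : K * (1 + 1 / r) / m = (1 + 1 / r) / M := by
        rw [hm]; field_simp
      rw [this]; exact hMθ) hθ (Real.exp (-(m * (δ1 / 2))) * S * vol) T
    (fun i hi l hl => (hcut i hi l hl).1) (fun i hi l hl => (hcut i hi l hl).2) (by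
      intro i hi l hl p
      by_cases hp1 : -δ1 ≤ p.2
      swap
      · have e1 : g p = 0 := Set.indicator_of_notMem (by exact hp1) _
        have e2 : T i l p = 0 := Set.indicator_of_notMem (by exact hp1) _
        simpa [e1, e2] using (hasSum_zero : HasSum (fun _ : ι => (0 : F)) 0)
      by_cases hp2 : h p = 0
      · have e1 : g p = 0 := hgz p hp2
        have e2 : T i l p = 0 := by simp [T, Set.indicator, hp2]
        simpa [e1, e2] using (hasSum_zero : HasSum (fun _ : ι => (0 : F)) 0)
      have e1 : g p = Real.exp (m * p.2) • V p.1 p.2 0 (h p) := Set.indicator_of_mem (by exact hp1) _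
      have e2 : T i l p = Real.exp ((m + l) * (p.2 - ξ i l * p.1)) • V p.1 p.2 (ξ i l) (h p) :=
        Set.indicator_of_mem (by exact hp1) _
      obtain ⟨-, -, h3, h4⟩ := hs p.1 p.2 hp2
      obtain ⟨h5, h6⟩ := hδr _ _ hp1 h3 h4
      have hq : ∀ i ≤ K, |(i:ℝ) / m| ≤ r := by
        intro i hi
        have := hξM i hi 0
        simp only [ξ, abs_neg, Nat.cast_zero, add_zero] at this
        exact this.trans hMr
      have hx := hexp (Real.exp p.1 - 1) (Real.exp p.2 - 1) (i / m) (l / m) (by linarith) (by linarith)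
        (hq i hi) (hq l hl)
      have e3 : -((i:ℝ) / m) / (1 + l / m) = ξ i l := by
        simp only [ξ]
        have : m + l ≠ 0 := by positivity
        field_simp
      rw [e3, add_sub_cancel, add_sub_cancel, Real.log_exp, Real.log_exp] at hx
      have hx2 := ((hx.mapL (ContinuousLinearMap.apply ℝ F (g p))).const_smul
        ((1 + (Real.exp p.1 - 1)) ^ i * (1 + (Real.exp p.2 - 1)) ^ l))
      convert hx2 using 1
      · ext k
        simp [smul_smul]
      · simp only [ContinuousLinearMap.apply_apply, sub_apply, smul_sub,
          mul_apply_eq_comp, one_apply_eq_self]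
        congr 1
        have e4 : Ring.inverse (V p.1 p.2 0) (V p.1 p.2 0 (h p)) = h p := by
          rw [← mul_apply_eq_comp, Ring.inverse_mul_cancel _ (hV0 _ _)]
          rfl
        rw [e1, e2]
        simp only [map_smul, e4, smul_smul, add_sub_cancel]
        congr 1
        rw [← Real.exp_nat_mul, ← Real.exp_nat_mul, ← Real.exp_add, ← Real.exp_add]
        congr 1
        have : m + l ≠ 0 := by positivity
        simp only [ξ]
        field_simp
        ring) α 0
  simp only [pow_zero, mul_one, add_zero] at hest
  refine hest.trans ?_
  have hSv : 0 ≤ S * vol := by positivity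
  have hmax : max (2 * (4 / r ^ 2) ^ K * (Real.exp (-(m * (δ1 / 2))) * S * vol)) ((1 / 2) ^ K * ∫ p, ‖g p‖)
      ≤ 2 * (S * vol) * (1 / 2) ^ K := by
    apply max_le
    · have : (4 / r ^ 2) ^ K * Real.exp (-(m * (δ1 / 2))) ≤ (1 / 2) ^ K := by
        calc _ = (4 / r ^ 2 * Real.exp (-(M * (δ1 / 2)))) ^ K := by
              rw [mul_pow, ← Real.exp_nat_mul, hm]
              congr 2; ring
          _ ≤ _ := by gcongr
      calc _ = 2 * (S * vol) * ((4 / r ^ 2) ^ K * Real.exp (-(m * (δ1 / 2)))) := by ring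
        _ ≤ _ := by gcongr
    · calc _ ≤ (1 / 2) ^ K * (S * vol) := by gcongr
        _ ≤ (1 / 2) ^ K * (2 * (S * vol)) :=
          mul_le_mul_of_nonneg_left (by linarith) (by positivity)
        _ = _ := by ring
  calc _ ≤ 1 * (2 * (S * vol) * (1 / 2) ^ K) := by
        gcongr
        exact pow_le_one₀ hr.le hr1
    _ = _ := one_mul _

theorem core2D {F : Type*} [NormedAddCommGroup F] [NormedSpace ℝ F] [CompleteSpace F]
    (V : ℝ → ℝ → ℝ → (F →L[ℝ] F)) (hV : Continuous fun p : ℝ × ℝ × ℝ => V p.1 p.2.1 p.2.2)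
    (hV0 : ∀ x y, IsUnit (V x y 0))
    (h : ℝ × ℝ → F) (hh : Continuous h)
    (hs : ∀ x y, h (x, y) ≠ 0 → |x| ≤ 1 ∧ -2 ≤ y ∧ y ≤ 0 ∧ x ^ 2 ≤ -2 * y)
    (δ0 : ℝ)
    (hline : ∀ ξ η, |ξ| < δ0 → |η| < δ0 → ∫ x, V x (ξ * x + η) ξ (h (x, ξ * x + η)) = 0)
    (r : ℝ) (hr : 0 < r) (hr1 : r ≤ 1)
    {ι : Type*} [Countable ι] (u : ι → (F →L[ℝ] F)) (a b c d : ι → ℕ) (hc : ∀ k, c k = 0 → u k = 0)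
    (CU : ℝ) (hU : Summable fun k => ‖u k‖ * r ^ (a k + b k + c k + d k))
    (hUle : ∑' k, ‖u k‖ * r ^ (a k + b k + c k + d k) ≤ CU)
    (hexp : ∀ z0 z1 z2 z3 : ℝ, |z0| ≤ r → |z1| ≤ r → |z2| ≤ r → |z3| ≤ r →
      HasSum (fun k => (z0 ^ a k * z1 ^ b k * z2 ^ c k * z3 ^ d k) • u k)
        (V (Real.log (1 + z0)) (Real.log (1 + z1)) (-z2 / (1 + z3)) *
          Ring.inverse (V (Real.log (1 + z0)) (Real.log (1 + z1)) 0) - 1))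
    (δ1 : ℝ) (hδ1 : 0 < δ1) (hδ10 : δ1 < δ0)
    (hδr : ∀ x y : ℝ, -δ1 ≤ y → y ≤ 0 → x ^ 2 ≤ -2 * y → |Real.exp x - 1| ≤ r / 2 ∧ |Real.exp y - 1| ≤ r / 2)
    (θ : ℝ) (hθ0 : 0 ≤ θ) (hθ1 : θ ≤ 1) (hθ : θ * CU ≤ 1 / 2)
    (M : ℕ) (hM : 0 < M) (hMθ : (1 + 1 / r) / M ≤ θ * r) (hMr : 1 / (M:ℝ) ≤ r)
    (hMδ0 : 1 / (M:ℝ) < δ0) (hMδ1 : 1 / (M:ℝ) ≤ δ1 / 2)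
    (hMe : 4 / r ^ 2 * Real.exp (-(M * (δ1 / 2))) ≤ 1 / 2) :
    ∀ x y : ℝ, -δ1 < y → -(Real.log 2 / M) < y → h (x, y) = 0 := by
  have hM' : (0:ℝ) < M := by exact_mod_cast hM
  obtain ⟨C, hC⟩ := core_mom V hV hV0 h hh hs δ0 hline r hr hr1 u a b c d hc CU hU hUle hexp δ1 hδ1 hδ10 hδr
    θ hθ0 hθ1 hθ M hM hMθ hMr hMδ0 hMδ1 hMe
  have hGc : Continuous fun p : ℝ × ℝ => V p.1 p.2 0 (h p) := by
    have : Continuous fun p : ℝ × ℝ => V p.1 p.2 0 :=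
      hV.comp (by fun_prop : Continuous fun p : ℝ × ℝ => (p.1, p.2, (0:ℝ)))
    exact this.clm_apply hh
  have hz1 : ∀ x y, ¬ |x| ≤ 1 → h (x, y) = 0 := by
    intro x y hx
    by_contra h0
    exact hx (hs _ _ h0).1
  have hz2 : ∀ x y, 0 < y → h (x, y) = 0 := by
    intro x y hx
    by_contra h0
    exact absurd (hs _ _ h0).2.2.1 (not_le.2 hx)
  let φ : ℕ → ℝ → F := fun α y => ∫ x in Set.Icc (-1:ℝ) 1, (Real.exp x - 1) ^ α • V x y 0 (h (x, y))
  have hφc : ∀ α, Continuous (φ α) := by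
    intro α
    apply continuous_parametric_integral_of_continuous _ isCompact_Icc
    have h1 : Continuous fun q : ℝ × ℝ => V q.2 q.1 0 (h (q.2, q.1)) :=
      hGc.comp (by fun_prop : Continuous fun q : ℝ × ℝ => (q.2, q.1))
    exact Continuous.smul (by fun_prop) h1
  have hφ : ∀ α y, φ α y = ∫ x, (Real.exp x - 1) ^ α • V x y 0 (h (x, y)) := by
    intro α y
    refine setIntegral_eq_integral_of_forall_compl_eq_zero fun x hx => ?_
    rw [hz1 x y (fun hh => hx (abs_le.1 hh))]
    simp
  have hφ0 : ∀ α y, 0 < y → φ α y = 0 := by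
    intro α y hy
    rw [hφ]
    simp [hz2 _ y hy]
  have hlap : ∀ α : ℕ, ∀ k : ℕ, 1 ≤ k → ‖∫ y in (-δ1)..0, Real.exp (k * M * y) • φ α y‖ ≤
      C * Real.exp (-(Real.log 2 / M * M * k)) := by
    intro α k hk
    obtain ⟨hi, hb⟩ := hC k hk α
    have e1 : C * Real.exp (-(Real.log 2 / M * M * k)) = C * (1 / 2) ^ k := by
      congr 1
      rw [div_mul_cancel₀ _ hM'.ne', mul_comm, ← mul_neg, Real.exp_nat_mul, Real.exp_neg, Real.exp_log (by norm_num)]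
      norm_num
    rw [e1]
    convert hb using 2
    rw [Measure.volume_eq_prod] at hi ⊢
    rw [integral_prod_symm _ hi]
    have e2 : ∀ y, ∫ x, (Real.exp x - 1) ^ α • Set.indicator {p : ℝ × ℝ | -δ1 ≤ p.2}
        (fun p => Real.exp (k * M * p.2) • V p.1 p.2 0 (h p)) (x, y) =
        Set.indicator (Set.Ici (-δ1)) (fun y => Real.exp (k * M * y) • φ α y) y := by
      intro y
      by_cases hy : -δ1 ≤ y
      · rw [Set.indicator_of_mem (by exact hy), hφ, ← integral_smul]
        congr 1
        ext x
        rw [Set.indicator_of_mem (by exact hy), smul_comm]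
      · rw [Set.indicator_of_notMem (by exact hy)]
        have : ∀ x, Set.indicator {p : ℝ × ℝ | -δ1 ≤ p.2}
          (fun p => Real.exp (k * M * p.2) • V p.1 p.2 0 (h p)) (x, y) = 0 :=
          fun x => Set.indicator_of_notMem (by exact hy) _
        simp [this]
    simp only [e2]
    rw [integral_indicator measurableSet_Ici, integral_Ici_eq_integral_Ioi,
      intervalIntegral.integral_of_le (by linarith)]
    symm
    refine setIntegral_eq_of_subset_of_forall_sdiff_eq_zero measurableSet_Ioi Set.Ioc_subset_Ioi_self ?_
    rintro y ⟨hy1, hy2⟩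
    have : 0 < y := by
      by_contra hcon
      exact hy2 ⟨hy1, not_lt.1 hcon⟩
    rw [hφ0 α y this, smul_zero]
  have hneg : ∀ x y : ℝ, -δ1 < y → -(Real.log 2 / M) < y → y < 0 → h (x, y) = 0 := by
    intro x y h1 h2 h3
    have hm := moments_unique (fun x => V x y 0 (h (x, y))) (hGc.comp (by fun_prop : Continuous fun x : ℝ => (x, y)))
      (fun x hx => by
        by_contra hcon
        exact hx (by simp [hz1 x y hcon]))
      (fun k => by
        rw [← hφ]
        exact laplace_unique (φ k) (hφc k) (-δ1) (by linarith) M (Real.log 2 / M) C hM' (hlap k) y h1 h3 h2) x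
    have e4 : Ring.inverse (V x y 0) (V x y 0 (h (x, y))) = h (x, y) := by
      rw [← mul_apply_eq_comp, Ring.inverse_mul_cancel _ (hV0 _ _)]
      rfl
    rw [← e4]
    rw [hm, map_zero]
  intro x y h1 h2
  rcases lt_trichotomy y 0 with h3 | h3 | h3
  · exact hneg x y h1 h2 h3
  · subst h3
    have hl : 0 < Real.log 2 / M := div_pos (Real.log_pos (by norm_num)) hM'
    have hcl : Filter.Tendsto (fun y => h (x, y)) (nhdsWithin 0 (Set.Iio 0)) (nhds (h (x, 0))) :=
      ((hh.comp (by fun_prop : Continuous fun y : ℝ => (x, y))).tendsto 0).mono_left nhdsWithin_le_nhds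
    refine tendsto_nhds_unique hcl ?_
    refine (Filter.tendsto_congr' ?_).2 tendsto_const_nhds
    have : ∀ᶠ y in nhdsWithin (0:ℝ) (Set.Iio 0), y ∈ Set.Ioo (max (-δ1) (-(Real.log 2 / M))) 0 :=
      Ioo_mem_nhdsLT (max_lt (by linarith) (by linarith))
    filter_upwards [this] with y hy
    exact hneg x y ((le_max_left _ _).trans_lt hy.1) ((le_max_right _ _).trans_lt hy.1) hy.2
  · exact hz2 x y h3

section geo
set_option linter.unusedSectionVars false
variable {E : Type*} [NormedAddCommGroup E] [InnerProductSpace ℝ E]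
  {F : Type*} [NormedAddCommGroup F] [NormedSpace ℝ F] [CompleteSpace F]

noncomputable def gq (x₀ v₀ : E) (x y : ℝ) (w : E) : E := x • v₀ + (1 + y) • x₀ + w
noncomputable def gs (ξ : ℝ) : ℝ := (Real.sqrt (1 + ξ ^ 2))⁻¹
noncomputable def gd (x₀ v₀ : E) (ξ : ℝ) : E := v₀ + ξ • x₀
noncomputable def gp (x₀ v₀ : E) (q : E) (ξ : ℝ) : E :=
  q - (gs ξ ^ 2 * inner ℝ q (gd x₀ v₀ ξ)) • gd x₀ v₀ ξ
noncomputable def gV (x₀ v₀ : E) (Wt : E × E × E → (F →L[ℝ] F)) (x y ξ : ℝ) (w : E) : F →L[ℝ] F :=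
  Wt (gp x₀ v₀ (gq x₀ v₀ x y w) ξ, gs ξ • gd x₀ v₀ ξ, gq x₀ v₀ x y w)

open scoped ContDiff in
theorem gs_smooth : ContDiff ℝ ω gs := by
  unfold gs
  have h : ∀ ξ : ℝ, 1 + ξ ^ 2 ≠ 0 := fun ξ => by positivity
  have h2 : ∀ ξ : ℝ, Real.sqrt (1 + ξ ^ 2) ≠ 0 := fun ξ => by positivity
  exact ContDiff.inv (ContDiff.sqrt (by fun_prop) h) h2

open scoped ContDiff in
theorem gV_smooth (x₀ v₀ : E) (Wt : E × E × E → (F →L[ℝ] F)) (hW : AnalyticOnNhd ℝ Wt Set.univ) :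
    ContDiff ℝ ω fun p : ℝ × ℝ × ℝ × E => gV x₀ v₀ Wt p.1 p.2.1 p.2.2.1 p.2.2.2 := by
  have hW' : ContDiff ℝ ω Wt := contDiff_omega_iff_analyticOnNhd.2 hW
  have hs := gs_smooth
  unfold gV
  apply hW'.comp
  have hq : ContDiff ℝ ω fun p : ℝ × ℝ × ℝ × E => gq x₀ v₀ p.1 p.2.1 p.2.2.2 := by
    unfold gq; fun_prop
  have hd : ContDiff ℝ ω fun p : ℝ × ℝ × ℝ × E => gd x₀ v₀ p.2.2.1 := by
    unfold gd; fun_prop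
  have hs2 : ContDiff ℝ ω fun p : ℝ × ℝ × ℝ × E => gs p.2.2.1 := hs.comp (by fun_prop)
  have hp : ContDiff ℝ ω fun p : ℝ × ℝ × ℝ × E => gp x₀ v₀ (gq x₀ v₀ p.1 p.2.1 p.2.2.2) p.2.2.1 := by
    unfold gp
    exact hq.sub (((hs2.pow 2).mul (hq.inner ℝ hd)).smul hd)
  exact hp.prodMk ((hs2.smul hd).prodMk hq)

theorem gd_norm (x₀ v₀ : E) (hx₀ : ‖x₀‖ = 1) (hv₀ : ‖v₀‖ = 1) (h : inner ℝ x₀ v₀ = 0) (ξ : ℝ) :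
    inner ℝ (gd x₀ v₀ ξ) (gd x₀ v₀ ξ) = 1 + ξ ^ 2 := by
  have h' : inner ℝ v₀ x₀ = 0 := by rw [real_inner_comm]; exact h
  simp only [gd, inner_add_left, inner_add_right, real_inner_smul_left, real_inner_smul_right, h, h',
    real_inner_self_eq_norm_sq, norm_smul, mul_pow, Real.norm_eq_abs, sq_abs, hx₀, hv₀]
  ring

theorem gs_sq (ξ : ℝ) : gs ξ ^ 2 * (1 + ξ ^ 2) = 1 := by
  have h : (0:ℝ) < 1 + ξ ^ 2 := by positivity
  rw [gs, inv_pow, Real.sq_sqrt h.le, inv_mul_cancel₀ h.ne']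

theorem gs_pos (ξ : ℝ) : 0 < gs ξ := by
  unfold gs; positivity

theorem gv_norm (x₀ v₀ : E) (hx₀ : ‖x₀‖ = 1) (hv₀ : ‖v₀‖ = 1) (h : inner ℝ x₀ v₀ = 0) (ξ : ℝ) :
    ‖gs ξ • gd x₀ v₀ ξ‖ = 1 := by
  have h1 : ‖gs ξ • gd x₀ v₀ ξ‖ ^ 2 = 1 := by
    rw [← real_inner_self_eq_norm_sq, real_inner_smul_left, real_inner_smul_right, gd_norm x₀ v₀ hx₀ hv₀ h]
    linear_combination gs_sq ξ
  have h2 := norm_nonneg (gs ξ • gd x₀ v₀ ξ)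
  nlinarith

theorem gV_unit (x₀ v₀ : E) (hx₀ : ‖x₀‖ = 1) (hv₀ : ‖v₀‖ = 1) (h : inner ℝ x₀ v₀ = 0)
    (Wt : E × E × E → (F →L[ℝ] F)) (hinv : ∀ p v x, ‖v‖ = 1 → IsUnit (Wt (p, v, x))) (x y ξ : ℝ) (w : E) :
    IsUnit (gV x₀ v₀ Wt x y ξ w) := hinv _ _ _ (gv_norm x₀ v₀ hx₀ hv₀ h ξ)

theorem gp_line (x₀ v₀ : E) (hx₀ : ‖x₀‖ = 1) (hv₀ : ‖v₀‖ = 1) (h : inner ℝ x₀ v₀ = 0) (q : E) (x ξ : ℝ) :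
    gp x₀ v₀ (q + x • gd x₀ v₀ ξ) ξ = gp x₀ v₀ q ξ := by
  unfold gp
  rw [inner_add_left, real_inner_smul_left, gd_norm x₀ v₀ hx₀ hv₀ h, mul_add]
  have : gs ξ ^ 2 * (x * (1 + ξ ^ 2)) = x := by
    rw [mul_left_comm, gs_sq, mul_one]
  rw [this, add_smul]
  abel

/-- line integrals in graph coordinates vanish -/
theorem line_zero (x₀ v₀ : E) (hx₀ : ‖x₀‖ = 1) (hv₀ : ‖v₀‖ = 1) (h : inner ℝ x₀ v₀ = 0)
    (Wt : E × E × E → (F →L[ℝ] F)) (f : E → F) (ξ η : ℝ) (w : E)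
    (hint : ∫ t : ℝ, Wt (gp x₀ v₀ (gq x₀ v₀ 0 η w) ξ, gs ξ • gd x₀ v₀ ξ,
      gp x₀ v₀ (gq x₀ v₀ 0 η w) ξ + t • gs ξ • gd x₀ v₀ ξ)
      (f (gp x₀ v₀ (gq x₀ v₀ 0 η w) ξ + t • gs ξ • gd x₀ v₀ ξ)) = 0) :
    ∫ x, gV x₀ v₀ Wt x (ξ * x + η) ξ w (f (gq x₀ v₀ x (ξ * x + η) w)) = 0 := by
  set d := gd x₀ v₀ ξ with hd
  set q0 := gq x₀ v₀ 0 η w with hq0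
  have hq : ∀ x : ℝ, gq x₀ v₀ x (ξ * x + η) w = q0 + x • d := by
    intro x
    simp only [hq0, hd, gq, gd]
    module
  have hs := gs_pos ξ
  set τ : ℝ := gs ξ ^ 2 * inner ℝ q0 d with hτ
  have hpt : ∀ x : ℝ, gp x₀ v₀ q0 ξ + ((gs ξ)⁻¹ * x + (gs ξ)⁻¹ * τ) • gs ξ • d = q0 + x • d := by
    intro x
    rw [smul_smul, ← mul_add, mul_comm _ (gs ξ), mul_inv_cancel_left₀ hs.ne', gp, ← hd, ← hτ]
    module
  let Φ : ℝ → F := fun t => Wt (gp x₀ v₀ q0 ξ, gs ξ • d, gp x₀ v₀ q0 ξ + t • gs ξ • d)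
      (f (gp x₀ v₀ q0 ξ + t • gs ξ • d))
  have hΦ : ∫ t, Φ t = 0 := hint
  have h1 : ∀ x : ℝ, gV x₀ v₀ Wt x (ξ * x + η) ξ w (f (gq x₀ v₀ x (ξ * x + η) w)) =
      Φ ((gs ξ)⁻¹ * x + (gs ξ)⁻¹ * τ) := by
    intro x
    simp only [Φ, hpt, gV, hq]
    rw [gp_line x₀ v₀ hx₀ hv₀ h]
  simp_rw [h1]
  rw [Measure.integral_comp_mul_left (fun t => Φ (t + (gs ξ)⁻¹ * τ)) (gs ξ)⁻¹,
    integral_add_right_eq_self, hΦ, smul_zero]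

theorem gU_analytic (x₀ v₀ : E) (hx₀ : ‖x₀‖ = 1) (hv₀ : ‖v₀‖ = 1) (h : inner ℝ x₀ v₀ = 0)
    (Wt : E × E × E → (F →L[ℝ] F)) (hW : AnalyticOnNhd ℝ Wt Set.univ)
    (hinv : ∀ p v x, ‖v‖ = 1 → IsUnit (Wt (p, v, x))) :
    AnalyticAt ℝ (fun q : (Fin 4 → ℝ) × E =>
      gV x₀ v₀ Wt (Real.log (1 + q.1 0)) (Real.log (1 + q.1 1)) (-q.1 2 / (1 + q.1 3)) q.2 *
        Ring.inverse (gV x₀ v₀ Wt (Real.log (1 + q.1 0)) (Real.log (1 + q.1 1)) 0 q.2)) 0 := by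
  apply ContDiffAt.analyticAt
  have hV := gV_smooth x₀ v₀ Wt hW
  have hc : ∀ j : Fin 4, ContDiffAt ℝ ⊤ (fun q : (Fin 4 → ℝ) × E => q.1 j) 0 := by
    intro j
    exact (by fun_prop : ContDiff ℝ ⊤ (fun q : (Fin 4 → ℝ) × E => q.1 j)).contDiffAt
  have hc1 : ∀ j : Fin 4, ContDiffAt ℝ ⊤ (fun q : (Fin 4 → ℝ) × E => 1 + q.1 j) 0 :=
    fun j => contDiffAt_const.add (hc j)
  have hl : ∀ j : Fin 4, ContDiffAt ℝ ⊤ (fun q : (Fin 4 → ℝ) × E => Real.log (1 + q.1 j)) 0 :=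
    fun j => (hc1 j).log (by simp)
  have hx : ContDiffAt ℝ ⊤ (fun q : (Fin 4 → ℝ) × E => -q.1 2 / (1 + q.1 3)) 0 :=
    (hc 2).neg.div (hc1 3) (by simp)
  have hw : ContDiffAt ℝ ⊤ (fun q : (Fin 4 → ℝ) × E => q.2) 0 := contDiff_snd.contDiffAt
  have h1 : ContDiffAt ℝ ⊤ (fun q : (Fin 4 → ℝ) × E =>
      gV x₀ v₀ Wt (Real.log (1 + q.1 0)) (Real.log (1 + q.1 1)) (-q.1 2 / (1 + q.1 3)) q.2) 0 :=
    hV.contDiffAt.comp 0 ((hl 0).prodMk ((hl 1).prodMk (hx.prodMk hw)))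
  have h2 : ContDiffAt ℝ ⊤ (fun q : (Fin 4 → ℝ) × E =>
      gV x₀ v₀ Wt (Real.log (1 + q.1 0)) (Real.log (1 + q.1 1)) 0 q.2) 0 :=
    hV.contDiffAt.comp 0 ((hl 0).prodMk ((hl 1).prodMk (contDiffAt_const.prodMk hw)))
  obtain ⟨un, hun⟩ := gV_unit x₀ v₀ hx₀ hv₀ h Wt hinv (Real.log (1 + (0 : (Fin 4 → ℝ) × E).1 0))
    (Real.log (1 + (0 : (Fin 4 → ℝ) × E).1 1)) 0 (0 : (Fin 4 → ℝ) × E).2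
  have h3 := contDiffAt_ringInverse (n := ⊤) ℝ un
  rw [hun] at h3
  have h4 : ContDiffAt ℝ ⊤ (fun q : (Fin 4 → ℝ) × E =>
      Ring.inverse (gV x₀ v₀ Wt (Real.log (1 + q.1 0)) (Real.log (1 + q.1 1)) 0 q.2)) 0 :=
    ContDiffAt.comp (0 : (Fin 4 → ℝ) × E) (g := Ring.inverse) h3 h2
  exact h1.mul h4

theorem gp_orth (x₀ v₀ : E) (hx₀ : ‖x₀‖ = 1) (hv₀ : ‖v₀‖ = 1) (h : inner ℝ x₀ v₀ = 0) (q : E) (ξ : ℝ) :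
    inner ℝ (gp x₀ v₀ q ξ) (gs ξ • gd x₀ v₀ ξ) = 0 := by
  unfold gp
  rw [real_inner_smul_right, inner_sub_left, real_inner_smul_left, gd_norm x₀ v₀ hx₀ hv₀ h]
  linear_combination (-(gs ξ * inner ℝ q (gd x₀ v₀ ξ))) * gs_sq ξ

theorem delta0_exists (x₀ v₀ : E) (h : inner ℝ x₀ v₀ = 0) (δ : ℝ) (hδ : 0 < δ) :
    ∃ δ0 > 0, ∀ (ξ η : ℝ) (w : E), |ξ| < δ0 → |η| < δ0 → ‖w‖ < δ0 →
      ‖gs ξ • gd x₀ v₀ ξ - v₀‖ < δ ∧ ‖gp x₀ v₀ (gq x₀ v₀ 0 η w) ξ - x₀‖ < δ := by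
  have hs : Continuous gs := gs_smooth.continuous
  have c1 : Continuous fun p : ℝ × ℝ × E => gs p.1 • gd x₀ v₀ p.1 - v₀ := by
    unfold gd; fun_prop
  have c2 : Continuous fun p : ℝ × ℝ × E => gp x₀ v₀ (gq x₀ v₀ 0 p.2.1 p.2.2) p.1 - x₀ := by
    unfold gp gq gd; fun_prop
  have hs0 : gs 0 = 1 := by simp [gs]
  have e1 := c1.norm.tendsto 0
  have e2 := c2.norm.tendsto 0
  simp only [Prod.fst_zero, Prod.snd_zero, hs0, gd, gp, gq, zero_smul, add_zero, one_smul, sub_self, norm_zero,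
    zero_add, h, mul_zero, sub_zero] at e1 e2
  have e3 := (e1.eventually (gt_mem_nhds hδ)).and (e2.eventually (gt_mem_nhds hδ))
  obtain ⟨δ0, hδ0, hb⟩ := Metric.eventually_nhds_iff.1 e3
  refine ⟨δ0, hδ0, fun ξ η w h1 h2 h3 => ?_⟩
  have := @hb (ξ, η, w) (by
    rw [dist_zero_right, Prod.norm_def, Prod.norm_def]
    exact max_lt h1 (max_lt h2 h3))
  simpa [gd, gp, gq] using this

theorem supp_box (x₀ v₀ : E) (hx₀ : ‖x₀‖ = 1) (hv₀ : ‖v₀‖ = 1) (h : inner ℝ x₀ v₀ = 0) (x y : ℝ) (w : E)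
    (hw1 : inner ℝ w x₀ = 0) (hw2 : inner ℝ w v₀ = 0) (hb : ‖gq x₀ v₀ x y w‖ ≤ 1) :
    |x| ≤ 1 ∧ -2 ≤ y ∧ y ≤ 0 ∧ x ^ 2 ≤ -2 * y := by
  have h' : inner ℝ v₀ x₀ = 0 := by rw [real_inner_comm]; exact h
  have hw1' : inner ℝ x₀ w = 0 := by rw [real_inner_comm]; exact hw1
  have hw2' : inner ℝ v₀ w = 0 := by rw [real_inner_comm]; exact hw2
  have e : ‖gq x₀ v₀ x y w‖ ^ 2 = x ^ 2 + (1 + y) ^ 2 + ‖w‖ ^ 2 := by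
    rw [← real_inner_self_eq_norm_sq]
    simp only [gq, inner_add_left, inner_add_right, real_inner_smul_left, real_inner_smul_right, h, h', hw1, hw2,
      hw1', hw2', real_inner_self_eq_norm_sq, norm_smul, mul_pow, Real.norm_eq_abs, sq_abs, hx₀, hv₀]
    ring
  have h1 : ‖gq x₀ v₀ x y w‖ ^ 2 ≤ 1 := pow_le_one₀ (norm_nonneg _) hb
  have h2 := sq_nonneg ‖w‖
  refine ⟨?_, ?_, ?_, ?_⟩
  · rw [abs_le]; constructor <;> nlinarith [sq_nonneg (1 + y)]
  · nlinarith [sq_nonneg x]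
  · nlinarith [sq_nonneg x]
  · nlinarith [sq_nonneg y]

theorem delta1_exists (r δ0 : ℝ) (hr : 0 < r) (hδ0 : 0 < δ0) : ∃ δ1 > 0, δ1 < δ0 ∧
    ∀ x y : ℝ, -δ1 ≤ y → y ≤ 0 → x ^ 2 ≤ -2 * y → |Real.exp x - 1| ≤ r / 2 ∧ |Real.exp y - 1| ≤ r / 2 := by
  have e1 := (Real.continuous_exp.tendsto 0)
  rw [Real.exp_zero] at e1
  obtain ⟨κ, hκ, hb⟩ := Metric.tendsto_nhds_nhds.1 e1 (r / 2) (by positivity)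
  have hb' : ∀ t : ℝ, |t| < κ → |Real.exp t - 1| ≤ r / 2 := by
    intro t ht
    have := @hb t (by simpa using ht)
    rw [Real.dist_eq] at this
    exact this.le
  refine ⟨min (δ0 / 2) (min (κ / 2) (κ ^ 2 / 4)), by positivity, (min_le_left _ _).trans_lt (by linarith), ?_⟩
  intro x y h1 h2 h3
  have h4 : min (δ0 / 2) (min (κ / 2) (κ ^ 2 / 4)) ≤ κ / 2 := (min_le_right _ _).trans (min_le_left _ _)
  have h5 : min (δ0 / 2) (min (κ / 2) (κ ^ 2 / 4)) ≤ κ ^ 2 / 4 := (min_le_right _ _).trans (min_le_right _ _)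
  constructor
  · apply hb'
    apply abs_lt_of_sq_lt_sq _ hκ.le
    nlinarith
  · apply hb'
    rw [abs_of_nonpos h2]
    linarith

theorem M_exists (r δ0 δ1 θ : ℝ) (hr : 0 < r) (hδ0 : 0 < δ0) (hδ1 : 0 < δ1) (hθ : 0 < θ) :
    ∃ M : ℕ, 0 < M ∧ (1 + 1 / r) / M ≤ θ * r ∧ 1 / (M:ℝ) ≤ r ∧ 1 / (M:ℝ) < δ0 ∧ 1 / (M:ℝ) ≤ δ1 / 2 ∧
      4 / r ^ 2 * Real.exp (-(M * (δ1 / 2))) ≤ 1 / 2 := by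
  have t1 := tendsto_const_div_atTop_nhds_zero_nat (1 + 1 / r)
  have t2 := tendsto_const_div_atTop_nhds_zero_nat (1:ℝ)
  have t3 : Filter.Tendsto (fun M : ℕ => 4 / r ^ 2 * Real.exp (-(M * (δ1 / 2)))) Filter.atTop (nhds (4 / r ^ 2 * 0)) := by
    apply Filter.Tendsto.const_mul
    apply Real.tendsto_exp_neg_atTop_nhds_zero.comp
    exact tendsto_natCast_atTop_atTop.atTop_mul_const (by positivity)
  rw [mul_zero] at t3
  have := (Filter.eventually_gt_atTop (0:ℕ)).and ((t1.eventually (gt_mem_nhds (by positivity : 0 < θ * r))).and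
    ((t2.eventually (gt_mem_nhds hr)).and ((t2.eventually (gt_mem_nhds hδ0)).and
    ((t2.eventually (gt_mem_nhds (by positivity : 0 < δ1 / 2))).and
    (t3.eventually (gt_mem_nhds (by norm_num : (0:ℝ) < 1 / 2)))))))
  obtain ⟨M, h1, h2, h3, h4, h5, h6⟩ := this.exists
  exact ⟨M, h1, h2.le, h3.le, h4, h5.le, h6.le⟩

theorem geo_main (x₀ v₀ : E) (hx₀ : ‖x₀‖ = 1) (hv₀ : ‖v₀‖ = 1) (h : inner ℝ x₀ v₀ = 0)
    (Wt : E × E × E → (F →L[ℝ] F)) (hW : AnalyticOnNhd ℝ Wt Set.univ)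
    (hinv : ∀ p v x, ‖v‖ = 1 → IsUnit (Wt (p, v, x)))
    (f : E → F) (hf : Continuous f) (hsupp : ∀ x, f x ≠ 0 → ‖x‖ ≤ 1)
    (δ : ℝ) (hδ : 0 < δ)
    (hint : ∀ v : E, ‖v‖ = 1 → ‖v - v₀‖ < δ → ∀ p : E, inner ℝ p v = 0 → ‖p - x₀‖ < δ →
      ∫ t : ℝ, Wt (p, v, p + t • v) (f (p + t • v)) = 0) :
    ∃ ε > (0 : ℝ), ∀ x : E, ‖x - x₀‖ < ε → f x = 0 := by
  obtain ⟨r, hr, hr1, CU, hexp⟩ := word_expansion _ (gU_analytic x₀ v₀ hx₀ hv₀ h Wt hW hinv)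
  obtain ⟨δ0, hδ0, hd0⟩ := delta0_exists x₀ v₀ h δ hδ
  obtain ⟨δ1, hδ1, hδ10, hδr⟩ := delta1_exists r δ0 hr hδ0
  obtain ⟨θ, hθ0, hθ1, hθ⟩ : ∃ θ : ℝ, 0 < θ ∧ θ ≤ 1 ∧ θ * CU ≤ 1 / 2 := by
    have hp : 0 < |CU| + 1 := by positivity
    refine ⟨1 / (2 * (|CU| + 1)), by positivity, ?_, ?_⟩
    · rw [div_le_one (by positivity)]; linarith [abs_nonneg CU]
    · rw [div_mul_eq_mul_div, div_le_div_iff₀ (by positivity) (by norm_num)]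
      linarith [le_abs_self CU]
  obtain ⟨M, hM, hMθ, hMr, hMδ0, hMδ1, hMe⟩ := M_exists r δ0 δ1 θ hr hδ0 hδ1 hθ0
  have hM' : (0:ℝ) < M := by exact_mod_cast hM
  have hl2 : 0 < Real.log 2 / M := div_pos (Real.log_pos (by norm_num)) hM'
  have key : ∀ w : E, inner ℝ w x₀ = 0 → inner ℝ w v₀ = 0 → ‖w‖ ≤ r → ‖w‖ < δ0 →
      ∀ x y : ℝ, -δ1 < y → -(Real.log 2 / M) < y → f (gq x₀ v₀ x y w) = 0 := by
    intro w hw1 hw2 hwr hwδ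
    obtain ⟨u, hu1, hu2, hu3⟩ := hexp w hwr
    have hule : ∀ k, ‖(if wcount k 2 = 0 then 0 else u k : F →L[ℝ] F)‖ ≤ ‖u k‖ := by
      intro k; split_ifs <;> simp
    have hsu : Summable (fun k => ‖(if wcount k 2 = 0 then 0 else u k : F →L[ℝ] F)‖ *
        r ^ (wcount k 0 + wcount k 1 + wcount k 2 + wcount k 3)) :=
      Summable.of_nonneg_of_le (fun k => by positivity) (fun k => by gcongr; exact hule k) hu1
    refine core2D (fun x y ξ => gV x₀ v₀ Wt x y ξ w)
      ((gV_smooth x₀ v₀ Wt hW).continuous.comp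
        (by fun_prop : Continuous fun p : ℝ × ℝ × ℝ => (p.1, p.2.1, p.2.2, w)))
      (fun x y => gV_unit x₀ v₀ hx₀ hv₀ h Wt hinv x y 0 w)
      (fun p => f (gq x₀ v₀ p.1 p.2 w)) (hf.comp (by unfold gq; fun_prop))
      (fun x y hne => supp_box x₀ v₀ hx₀ hv₀ h x y w hw1 hw2 (hsupp _ hne)) δ0 ?_
      r hr hr1 (fun k => if wcount k 2 = 0 then 0 else u k) (fun k => wcount k 0) (fun k => wcount k 1)
      (fun k => wcount k 2) (fun k => wcount k 3) (fun k hk => if_pos hk) CU hsu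
      ((hsu.tsum_le_tsum (fun k => by gcongr; exact hule k) hu1).trans hu2) ?_
      δ1 hδ1 hδ10 hδr θ hθ0.le hθ1 hθ M hM hMθ hMr hMδ0 hMδ1 hMe
    · intro ξ η hξ hη
      obtain ⟨h1, h2⟩ := hd0 ξ η w hξ hη hwδ
      exact line_zero x₀ v₀ hx₀ hv₀ h Wt f ξ η w
        (hint _ (gv_norm x₀ v₀ hx₀ hv₀ h ξ) h1 _ (gp_orth x₀ v₀ hx₀ hv₀ h _ ξ) h2)
    · intro z0 z1 z2 z3 h0 h1 h2 h3
      have s1 := hu3 ![z0, z1, z2, z3] (by intro j; fin_cases j <;> simpa)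
      have s2 := hu3 ![z0, z1, 0, z3] (by intro j; fin_cases j <;> simp [*] <;> exact hr.le)
      have s3 := s1.sub s2
      have e1 : gV x₀ v₀ Wt (Real.log (1 + z0)) (Real.log (1 + z1)) 0 w *
        Ring.inverse (gV x₀ v₀ Wt (Real.log (1 + z0)) (Real.log (1 + z1)) 0 w) = 1 :=
        Ring.mul_inverse_cancel _ (gV_unit x₀ v₀ hx₀ hv₀ h Wt hinv _ _ 0 w)
      convert s3 using 1
      · rfl
      · rfl
      · ext1 k
        by_cases hk : wcount k 2 = 0
        · simp [hk]
        · simp [hk]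
      · simp [e1]
  refine ⟨min (min r δ0) (min δ1 (Real.log 2 / M)), by positivity, fun x hx => ?_⟩
  obtain ⟨⟨hx1, hx2⟩, hx3, hx4⟩ : (‖x - x₀‖ < r ∧ ‖x - x₀‖ < δ0) ∧ ‖x - x₀‖ < δ1 ∧ ‖x - x₀‖ < Real.log 2 / M := by
    simpa only [lt_min_iff] using hx
  have h' : inner ℝ v₀ x₀ = 0 := by rw [real_inner_comm]; exact h
  set α : ℝ := inner ℝ x v₀ with hα
  set y : ℝ := inner ℝ (x - x₀) x₀ with hy
  set w : E := x - x₀ - α • v₀ - y • x₀ with hw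
  have hxx : inner ℝ x₀ x₀ = (1:ℝ) := by rw [real_inner_self_eq_norm_sq, hx₀]; norm_num
  have hvv : inner ℝ v₀ v₀ = (1:ℝ) := by rw [real_inner_self_eq_norm_sq, hv₀]; norm_num
  have hw1 : inner ℝ w x₀ = 0 := by
    rw [hw, inner_sub_left, inner_sub_left, real_inner_smul_left, real_inner_smul_left, h', hxx, ← hy]
    ring
  have hw2 : inner ℝ w v₀ = 0 := by
    rw [hw, inner_sub_left, inner_sub_left, inner_sub_left, real_inner_smul_left, real_inner_smul_left, h, hvv, ← hα]
    ring
  have hyn : |y| ≤ ‖x - x₀‖ := by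
    have := abs_real_inner_le_norm (x - x₀) x₀
    rwa [hx₀, mul_one] at this
  have hwn : ‖w‖ ≤ ‖x - x₀‖ := by
    have e : inner ℝ w (x - x₀) = ‖w‖ ^ 2 := by
      have : x - x₀ = w + α • v₀ + y • x₀ := by rw [hw]; abel
      rw [this, inner_add_right, inner_add_right, real_inner_smul_right, real_inner_smul_right, hw1, hw2,
        real_inner_self_eq_norm_sq]
      ring
    have e2 := real_inner_le_norm w (x - x₀)
    rw [e] at e2
    by_contra hcon
    push Not at hcon
    have := norm_nonneg (x - x₀)
    nlinarith
  have e : x = gq x₀ v₀ α y w := by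
    simp only [gq, hw]; module
  rw [e]
  have := abs_le.1 hyn
  exact key w hw1 hw2 (by linarith) (by linarith) α y (by linarith) (by linarith)
end geo

end aux

open Matrix MeasureTheory
open scoped RealInnerProductSpace

attribute [local instance] Matrix.normedAddCommGroup Matrix.normedSpace

theorem mat_op (N : ℕ) : ∃ Lm : Matrix (Fin N) (Fin N) ℂ →L[ℝ] ((Fin N → ℂ) →L[ℝ] (Fin N → ℂ)),
    (∀ A x, Lm A x = A *ᵥ x) ∧ ∀ A, IsUnit A → IsUnit (Lm A) := by
  let L0 : Matrix (Fin N) (Fin N) ℂ →ₗ[ℝ] ((Fin N → ℂ) →L[ℝ] (Fin N → ℂ)) :=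
    { toFun := fun A => LinearMap.toContinuousLinearMap ((Matrix.mulVecLin A).restrictScalars ℝ)
      map_add' := fun A B => by
        ext1 x
        exact Matrix.add_mulVec A B x
      map_smul' := fun c A => by
        ext1 x
        exact Matrix.smul_mulVec c A x }
  let Lm := LinearMap.toContinuousLinearMap L0
  have hL : ∀ A x, Lm A x = A *ᵥ x := fun A x => rfl
  refine ⟨Lm, hL, ?_⟩
  rintro A ⟨B, rfl⟩
  have h1 : ∀ A B : Matrix (Fin N) (Fin N) ℂ, A * B = 1 → Lm A * Lm B = 1 := by
    intro A B hAB
    ext1 x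
    rw [mul_apply_eq_comp, hL, hL, Matrix.mulVec_mulVec, hAB, Matrix.one_mulVec]
    rfl
  exact ⟨⟨Lm B, Lm (B⁻¹ : (Matrix (Fin N) (Fin N) ℂ)ˣ), h1 _ _ (by simp), h1 _ _ (by simp)⟩, rfl⟩

/-- Local injectivity of the matrix-weighted X-ray transform near a strictly convex
boundary point of the closed unit ball in ℝⁿ: if the weighted line integrals vanish for
all lines near the tangent line at the glancing direction `(x₀, v₀)`, then `f` vanishes
near `x₀`. -/
theorem matrix_weighted_xray_local_injective_ball
    (n N : ℕ) (hn : 2 ≤ n) (hN : 1 ≤ N)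
    (x₀ v₀ : EuclideanSpace ℝ (Fin n))
    (hx₀ : ‖x₀‖ = 1) (hv₀ : ‖v₀‖ = 1) (hx₀v₀ : ⟪x₀, v₀⟫ = 0)
    (W : EuclideanSpace ℝ (Fin n) × EuclideanSpace ℝ (Fin n) × EuclideanSpace ℝ (Fin n) →
      Matrix (Fin N) (Fin N) ℂ)
    (hWanalytic : AnalyticOnNhd ℝ W Set.univ)
    (hWinv : ∀ (p : EuclideanSpace ℝ (Fin n)) (v : EuclideanSpace ℝ (Fin n))
      (x : EuclideanSpace ℝ (Fin n)), ‖v‖ = 1 → IsUnit (W (p, v, x)))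
    (f : EuclideanSpace ℝ (Fin n) → (Fin N → ℂ))
    (hf : Continuous f)
    (hsupp : Function.support f ⊆ Metric.closedBall (0 : EuclideanSpace ℝ (Fin n)) 1)
    (hint : ∃ δ > (0 : ℝ), ∀ v : EuclideanSpace ℝ (Fin n), ‖v‖ = 1 → ‖v - v₀‖ < δ →
      ∀ p : EuclideanSpace ℝ (Fin n), ⟪p, v⟫ = 0 → ‖p - x₀‖ < δ →
        (∫ t : ℝ, W (p, v, p + t • v) *ᵥ f (p + t • v)) = 0) :
    ∃ ε > (0 : ℝ), ∀ x : EuclideanSpace ℝ (Fin n), ‖x - x₀‖ < ε → f x = 0 := by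
  obtain ⟨δ, hδ, hint⟩ := hint
  obtain ⟨Lm, hL, hLu⟩ := mat_op N
  refine geo_main x₀ v₀ hx₀ hv₀ hx₀v₀ (fun q => Lm (W q)) ?_ (fun p v x hv => hLu _ (hWinv p v x hv)) f hf ?_ δ hδ ?_
  · exact fun q hq => (Lm.analyticAt _).comp (hWanalytic q hq)
  · intro x hx
    simpa using hsupp hx
  · intro v hv hvδ p hp hpδ
    simp only [hL]
    exact hint v hv hvδ p hp hpδ
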